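/- (Theorem: upper bound for SARRS.) Consider the model Y = XA + Z with Z having i.i.d. N(0,σ²) entries and A ∈ Θ(s,r,d,γ) with s ≥ r ≥ 1. Run the SARRS algorithm with the group Lasso penalty at level λ ≥ 4σ max_j ‖X_{*j}‖ (√r + √(4 log p)) on independent response copies Y_{(1)}, Y_{(2)}, Y_{(3)} (each equal to XA plus i.i.d. N(0, 4σ²) noise, mutually independent), using an initial orthonormal matrix V_{(0)} ∈ O(m,r). Suppose Condition SE(s_*, c_*, K) holds with an absolute constant K > 1 and s_* ≥ 2s, 6c_* ≤ √(s_*/s − 1), and that σ_r(V'V_{(0)}) ≥ c_0 and √s λ / d ≤ c_1, where V ∈ O(m,r) is the right singular vector matrix of XA, c_0 > 0 is an absolute constant and c_1 > 0 is sufficiently small. Then there is a constant C depending only on κ_±(s_*), γ, c_*, c_0, c_1 such that, uniformly over A ∈ Θ(s,r,d,γ), with probability at least 1 − 3/p, the output Â satisfies ‖Â − A‖_{S_q}² ≤ C r^{2/q−1}(σ² r m + s λ²) for all q ∈ [1,2] simultaneously. -/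

import Mathlib

open MeasureTheory ProbabilityTheory Matrix Set
open scoped ENNReal NNReal

noncomputable section

/-- Euclidean (ℓ₂) norm of a finitely indexed real vector. -/
def l2norm {I : Type*} [Fintype I] (v : I → ℝ) : ℝ := Real.sqrt (∑ i, v i ^ 2)

/-- Frobenius norm of a real matrix. -/
def frobNorm {I J : Type*} [Fintype I] [Fintype J] (M : Matrix I J ℝ) : ℝ :=
  Real.sqrt (∑ i, ∑ j, M i j ^ 2)

/-- ℓ₂/ℓ₁ norm: the sum of the ℓ₂ norms of the rows. -/
def norm21 {I J : Type*} [Fintype I] [Fintype J] (M : Matrix I J ℝ) : ℝ :=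
  ∑ i, l2norm (M i)

open Classical in
/-- Row support: indices of nonzero rows. -/
def rowSupport {I J : Type*} [Fintype I] [Fintype J] (M : Matrix I J ℝ) : Finset I :=
  Finset.univ.filter (fun i => M i ≠ 0)

/-- The j-th largest singular value (j ≥ 1), via the Courant–Fischer max–min
characterization: `σ_j(M) = max_{dim V = j} min_{v ∈ V, ‖v‖=1} ‖Mv‖`. -/
def singularValue {I J : Type*} [Fintype I] [Fintype J] (M : Matrix I J ℝ) (j : ℕ) : ℝ :=
  sSup { t | ∃ V : Submodule ℝ (J → ℝ), Module.finrank ℝ V = j ∧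
    t = sInf { u | ∃ v ∈ V, l2norm v = 1 ∧ u = l2norm (M.mulVec v) } }

/-- Operator norm (largest singular value). -/
def opNorm {I J : Type*} [Fintype I] [Fintype J] (M : Matrix I J ℝ) : ℝ :=
  sSup { t | ∃ v : J → ℝ, l2norm v = 1 ∧ t = l2norm (M.mulVec v) }

/-- Schatten-q norm. -/
def schattenNorm {I J : Type*} [Fintype I] [Fintype J] (M : Matrix I J ℝ) (q : ℝ) : ℝ :=
  (∑ i ∈ Finset.Icc 1 (min (Fintype.card I) (Fintype.card J)), singularValue M i ^ q) ^ (1 / q)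

/-- Squared lower k-sparse Riesz constant `κ₋²(k)`:
the minimum over column subsets B with |B| = k of the smallest eigenvalue of X_B' X_B. -/
def kappaMinusSq {n p : ℕ} (X : Matrix (Fin n) (Fin p) ℝ) (k : ℕ) : ℝ :=
  sInf { t | ∃ B : Finset (Fin p), B.card = k ∧ ∃ v : Fin p → ℝ,
    (∀ i, i ∉ B → v i = 0) ∧ l2norm v = 1 ∧ t = l2norm (X.mulVec v) ^ 2 }

/-- Squared upper k-sparse Riesz constant `κ₊²(k)`. -/
def kappaPlusSq {n p : ℕ} (X : Matrix (Fin n) (Fin p) ℝ) (k : ℕ) : ℝ :=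
  sSup { t | ∃ B : Finset (Fin p), B.card = k ∧ ∃ v : Fin p → ℝ,
    (∀ i, i ∉ B → v i = 0) ∧ l2norm v = 1 ∧ t = l2norm (X.mulVec v) ^ 2 }

def kappaMinus {n p : ℕ} (X : Matrix (Fin n) (Fin p) ℝ) (k : ℕ) : ℝ :=
  Real.sqrt (kappaMinusSq X k)

def kappaPlus {n p : ℕ} (X : Matrix (Fin n) (Fin p) ℝ) (k : ℕ) : ℝ :=
  Real.sqrt (kappaPlusSq X k)

/-- Membership in the parameter space Θ(s, r, d, γ): rank r, all nonzero singular values in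
(d, γd], and at most s nonzero rows. (Singular values are automatically nonincreasing.) -/
def memTheta {p m : ℕ} (A : Matrix (Fin p) (Fin m) ℝ) (s r : ℕ) (d γ : ℝ) : Prop :=
  A.rank = r ∧ 0 < d ∧ singularValue A 1 ≤ γ * d ∧ d < singularValue A r ∧
    (rowSupport A).card ≤ s

/-- `V` is a matrix of top-r right singular vectors of `M`: the columns of `V` are orthonormal
eigenvectors of `MᵀM`, the j-th column with eigenvalue `σ_j(M)²`. -/
def IsRightSingularVectors {I J : Type*} [Fintype I] [Fintype J] {r : ℕ}
    (M : Matrix I J ℝ) (V : Matrix J (Fin r) ℝ) : Prop :=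
  Vᵀ * V = 1 ∧ ∀ j : Fin r,
    (Mᵀ * M).mulVec (fun i => V i j) = (singularValue M (j.1 + 1)) ^ 2 • (fun i => V i j)

/-- `U` is a matrix of top-r left singular vectors of `M`. -/
def IsLeftSingularVectors {I J : Type*} [Fintype I] [Fintype J] {r : ℕ}
    (M : Matrix I J ℝ) (U : Matrix I (Fin r) ℝ) : Prop :=
  IsRightSingularVectors Mᵀ U

instance matrixMeasurableSpace {n m : ℕ} : MeasurableSpace (Matrix (Fin n) (Fin m) ℝ) :=
  (inferInstance : MeasurableSpace (Fin n → Fin m → ℝ))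

/-- Law of an n×m random matrix with i.i.d. N(0, v) entries. -/
def gaussianMatrix (n m : ℕ) (v : ℝ≥0) : Measure (Matrix (Fin n) (Fin m) ℝ) :=
  Measure.pi fun _ : Fin n => Measure.pi fun _ : Fin m => gaussianReal 0 v

open Classical in
/-- Kullback–Leibler divergence D(P‖Q). -/
def klDivM {Ω : Type*} [MeasurableSpace Ω] (P Q : Measure Ω) : ℝ≥0∞ :=
  if P ≪ Q ∧ Integrable (fun x => Real.log (P.rnDeriv Q x).toReal) P
  then ENNReal.ofReal (∫ x, Real.log (P.rnDeriv Q x).toReal ∂P)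
  else ∞

/-- ε-packing number of T with respect to the distance ρ: the maximal cardinality of a subset
of T whose pairwise ρ-distances are all at least ε. -/
def packingNumber {α : Type*} (T : Set α) (ρ : α → α → ℝ) (ε : ℝ) : ℕ :=
  sSup { k | ∃ S : Finset α, ↑S ⊆ T ∧ (∀ x ∈ S, ∀ y ∈ S, x ≠ y → ε ≤ ρ x y) ∧ S.card = k }

/-- Moore–Penrose pseudoinverse (characterized by the four Penrose equations). -/
def IsMoorePenrose {k : ℕ} (M Mi : Matrix (Fin k) (Fin k) ℝ) : Prop :=
  M * Mi * M = M ∧ Mi * M * Mi = Mi ∧ (M * Mi)ᵀ = M * Mi ∧ (Mi * M)ᵀ = Mi * M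

/-
Both group Lasso steps see the true signal through noise whose correlation with every column of `X`
is at most `λ/2`. On that event the error lies in the cone where the off-support rows are dominated
by those on the support, and the sparse eigenvalue condition, applied to a decomposition of the rows
into blocks of decreasing size, gives a restricted eigenvalue there. Hence `X B₁` is within
`O(√s λ)` of `X A V₀`. As `VᵀV₀` is well conditioned, the column space of `X B₁` then captures
`X A` up to `O(√s λ)`, and the rows of the projected second sample capture it up to an additional
`‖U₁ᵀZ₂‖_F`. The second Lasso step recovers `A V₁`, so `‖Â - A‖_F = O(√s λ + σ √(r m))`; since
`Â - A` has rank at most `2r`, Hölder's inequality turns this into all the Schatten bounds.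

Each of the three noise events has probability at least `1 - 1/p` given the earlier samples, by a
Chernoff bound for the norm of a linear image of a Gaussian vector.
-/

section Norms

variable {I J K : Type*} [Fintype I] [Fintype J] [Fintype K]

lemma l2norm_eq_norm_toLp (v : I → ℝ) : l2norm v = ‖WithLp.toLp 2 v‖ := by
  simp [EuclideanSpace.norm_eq, l2norm]

lemma l2norm_nonneg (v : I → ℝ) : 0 ≤ l2norm v := Real.sqrt_nonneg _

lemma l2norm_sq (v : I → ℝ) : l2norm v ^ 2 = v ⬝ᵥ v := by
  rw [l2norm, Real.sq_sqrt (Finset.sum_nonneg fun i _ => sq_nonneg _)]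
  simp only [dotProduct, pow_two]

lemma l2norm_smul (c : ℝ) (v : I → ℝ) : l2norm (c • v) = |c| * l2norm v := by
  simp only [l2norm_eq_norm_toLp, WithLp.toLp_smul, norm_smul, Real.norm_eq_abs]

lemma l2norm_eq_zero_iff {v : I → ℝ} : l2norm v = 0 ↔ v = 0 := by
  rw [l2norm_eq_norm_toLp, norm_eq_zero, WithLp.toLp_eq_zero]

lemma l2norm_zero : l2norm (0 : I → ℝ) = 0 := l2norm_eq_zero_iff.2 rfl

lemma abs_dotProduct_le (v w : I → ℝ) : |v ⬝ᵥ w| ≤ l2norm v * l2norm w := by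
  simpa [l2norm_eq_norm_toLp, EuclideanSpace.inner_toLp_toLp, mul_comm] using
    abs_real_inner_le_norm (WithLp.toLp 2 w) (WithLp.toLp 2 v)

lemma l2norm_normalize {v : I → ℝ} (hv : v ≠ 0) : l2norm ((l2norm v)⁻¹ • v) = 1 := by
  rw [l2norm_smul, abs_of_nonneg (inv_nonneg.2 (l2norm_nonneg v)),
    inv_mul_cancel₀ (l2norm_eq_zero_iff.not.2 hv)]

/-- Frobenius inner product `⟨M, N⟩ = tr(MᵀN)` of real matrices, the symmetric bilinear form whose
quadratic form is `frobNorm ^ 2`. -/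
def frobInner (M N : Matrix I J ℝ) : ℝ := (Mᵀ * N).trace

lemma frobNorm_eq_l2norm_vec (M : Matrix I J ℝ) : frobNorm M = l2norm (vec M) := by
  simp only [frobNorm, l2norm, vec, Fintype.sum_prod_type]
  rw [Finset.sum_comm]

lemma frobNorm_nonneg (M : Matrix I J ℝ) : 0 ≤ frobNorm M := Real.sqrt_nonneg _

lemma frobNorm_eq_zero_iff {M : Matrix I J ℝ} : frobNorm M = 0 ↔ M = 0 := by
  rw [frobNorm_eq_l2norm_vec, l2norm_eq_zero_iff, vec_eq_zero_iff]

lemma frobNorm_add_le (M N : Matrix I J ℝ) : frobNorm (M + N) ≤ frobNorm M + frobNorm N := by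
  simp only [frobNorm_eq_l2norm_vec, vec_add, l2norm_eq_norm_toLp, WithLp.toLp_add]
  exact norm_add_le _ _

lemma frobNorm_smul (c : ℝ) (M : Matrix I J ℝ) : frobNorm (c • M) = |c| * frobNorm M := by
  rw [frobNorm_eq_l2norm_vec, vec_smul, l2norm_smul, frobNorm_eq_l2norm_vec]

lemma frobNorm_neg (M : Matrix I J ℝ) : frobNorm (-M) = frobNorm M := by
  rw [← neg_one_smul ℝ M, frobNorm_smul, abs_neg, abs_one, one_mul]

lemma frobNorm_transpose (M : Matrix I J ℝ) : frobNorm Mᵀ = frobNorm M := by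
  simp only [frobNorm, transpose_apply]
  rw [Finset.sum_comm]

lemma frobNorm_sq_eq_frobInner (M : Matrix I J ℝ) : frobNorm M ^ 2 = frobInner M M := by
  rw [frobNorm_eq_l2norm_vec, l2norm_sq, vec_dotProduct_vec, frobInner]

lemma frobNorm_sq_eq_sum_row (M : Matrix I J ℝ) : frobNorm M ^ 2 = ∑ i, l2norm (M i) ^ 2 := by
  simp only [frobNorm, Real.sq_sqrt (by positivity : 0 ≤ ∑ i, ∑ j, M i j ^ 2), l2norm_sq,
    dotProduct, ← pow_two]

lemma frobNorm_sq_eq_sum_col (M : Matrix I J ℝ) : frobNorm M ^ 2 = ∑ j, l2norm (Mᵀ j) ^ 2 := by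
  rw [← frobNorm_transpose, frobNorm_sq_eq_sum_row]

lemma abs_frobInner_le (M N : Matrix I J ℝ) : |frobInner M N| ≤ frobNorm M * frobNorm N := by
  simpa only [frobInner, vec_dotProduct_vec, ← frobNorm_eq_l2norm_vec] using
    abs_dotProduct_le (vec M) (vec N)

lemma frobInner_comm (M N : Matrix I J ℝ) : frobInner M N = frobInner N M := by
  rw [frobInner, frobInner, ← trace_transpose, transpose_mul, transpose_transpose]

lemma frobInner_add_right (M N N' : Matrix I J ℝ) :
    frobInner M (N + N') = frobInner M N + frobInner M N' := by
  rw [frobInner, Matrix.mul_add, trace_add, frobInner, frobInner]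

lemma frobInner_smul_right (c : ℝ) (M N : Matrix I J ℝ) :
    frobInner M (c • N) = c * frobInner M N := by
  rw [frobInner, Matrix.mul_smul, trace_smul, frobInner, smul_eq_mul]

lemma frobInner_sum_right {ι : Type*} (s : Finset ι) (M : Matrix I J ℝ) (N : ι → Matrix I J ℝ) :
    frobInner M (∑ k ∈ s, N k) = ∑ k ∈ s, frobInner M (N k) := by
  simp only [frobInner, Matrix.mul_sum, trace_sum]

lemma frobInner_mul_left (L : Matrix K I ℝ) (M : Matrix I J ℝ) (N : Matrix K J ℝ) :
    frobInner (L * M) N = frobInner M (Lᵀ * N) := by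
  rw [frobInner, frobInner, transpose_mul, Matrix.mul_assoc]

lemma frobNorm_add_sq (M N : Matrix I J ℝ) :
    frobNorm (M + N) ^ 2 = frobNorm M ^ 2 + 2 * frobInner M N + frobNorm N ^ 2 := by
  simp only [frobNorm_sq_eq_frobInner, frobInner_add_right, frobInner_comm (M + N)]
  rw [frobInner_comm N M]
  ring

lemma frobNorm_mul_of_transpose_mul_self [DecidableEq K] {U : Matrix I K ℝ} (hU : Uᵀ * U = 1)
    (M : Matrix K J ℝ) : frobNorm (U * M) = frobNorm M := by
  rw [← sq_eq_sq₀ (frobNorm_nonneg _) (frobNorm_nonneg _), frobNorm_sq_eq_frobInner,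
    frobInner_mul_left, ← Matrix.mul_assoc, hU, Matrix.one_mul, frobNorm_sq_eq_frobInner]

lemma frobNorm_mul_transpose_of_transpose_mul_self [DecidableEq K] {V : Matrix J K ℝ}
    (hV : Vᵀ * V = 1) (M : Matrix I K ℝ) : frobNorm (M * Vᵀ) = frobNorm M := by
  rw [← frobNorm_transpose, transpose_mul, transpose_transpose,
    frobNorm_mul_of_transpose_mul_self hV, frobNorm_transpose]

variable [DecidableEq J] [DecidableEq K]

lemma frobNorm_sq_eq_add_mul_one_sub {V : Matrix J K ℝ} (hV : Vᵀ * V = 1) (M : Matrix I J ℝ) :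
    frobNorm M ^ 2 = frobNorm (M * V) ^ 2 + frobNorm (M * (1 - V * Vᵀ)) ^ 2 := by
  have orthogonal : (1 - V * Vᵀ) * V = 0 := by
    rw [Matrix.sub_mul, Matrix.mul_assoc, hV, Matrix.mul_one, Matrix.one_mul, sub_self]
  have cross : frobInner (M * V * Vᵀ) (M * (1 - V * Vᵀ)) = 0 := by
    rw [frobInner, trace_mul_comm, transpose_mul, transpose_transpose, ← Matrix.mul_assoc,
      Matrix.mul_assoc M, orthogonal, Matrix.mul_zero, Matrix.zero_mul, trace_zero]
  calc frobNorm M ^ 2 = frobNorm (M * V * Vᵀ + M * (1 - V * Vᵀ)) ^ 2 := by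
        rw [Matrix.mul_assoc, ← Matrix.mul_add, add_sub_cancel, Matrix.mul_one]
    _ = _ := by
        rw [frobNorm_add_sq, cross, frobNorm_mul_transpose_of_transpose_mul_self hV]
        ring

lemma frobNorm_mul_one_sub_le {V : Matrix J K ℝ} (hV : Vᵀ * V = 1) (M : Matrix I J ℝ) :
    frobNorm (M * (1 - V * Vᵀ)) ≤ frobNorm M := by
  refine le_of_pow_le_pow_left₀ two_ne_zero (frobNorm_nonneg M) ?_
  rw [frobNorm_sq_eq_add_mul_one_sub hV M]
  exact le_add_of_nonneg_left (sq_nonneg _)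

lemma frobNorm_one_sub_mul_le {U : Matrix J K ℝ} (hU : Uᵀ * U = 1) (M : Matrix J I ℝ) :
    frobNorm ((1 - U * Uᵀ) * M) ≤ frobNorm M := by
  simpa [← frobNorm_transpose ((1 - U * Uᵀ) * M), frobNorm_transpose M] using
    frobNorm_mul_one_sub_le hU Mᵀ

end Norms

section SingularValues

variable {E F : Type*} [NormedAddCommGroup E] [InnerProductSpace ℝ E] [FiniteDimensional ℝ E]
  [NormedAddCommGroup F] [InnerProductSpace ℝ F] [FiniteDimensional ℝ F]

lemma norm_map_sq_eq_sum_singularValues (T : E →ₗ[ℝ] F) (v : E) :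
    ‖T v‖ ^ 2 = ∑ k : Fin (Module.finrank ℝ E), T.singularValues k ^ 2 *
      inner ℝ (T.isSymmetric_adjoint_comp_self.eigenvectorBasis rfl k) v ^ 2 := by
  have hS := T.isSymmetric_adjoint_comp_self
  rw [← real_inner_self_eq_norm_sq, ← LinearMap.adjoint_inner_right,
    ← (hS.eigenvectorBasis rfl).sum_inner_mul_inner]
  refine Finset.sum_congr rfl fun k _ => ?_
  rw [← LinearMap.comp_apply, ← hS, hS.apply_eigenvectorBasis, real_inner_smul_left,
    T.sq_singularValues_fin rfl, real_inner_comm v]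
  simp only [RCLike.ofReal_real_eq_id, id]
  ring

lemma sum_singularValues_sq_eq_sum_norm_sq {ι : Type*} [Fintype ι] (T : E →ₗ[ℝ] F)
    (e : OrthonormalBasis ι ℝ E) :
    ∑ k : Fin (Module.finrank ℝ E), T.singularValues k ^ 2 = ∑ i, ‖T (e i)‖ ^ 2 := by
  simp only [T.sq_singularValues_fin rfl]
  have trace_eq := T.isSymmetric_adjoint_comp_self.trace_eq_sum_eigenvalues rfl
  rw [LinearMap.trace_eq_sum_inner _ e] at trace_eq
  simpa [LinearMap.adjoint_inner_right] using trace_eq.symm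

lemma exists_mem_norm_eq_one_map_eq_zero {W : Type*} [AddCommGroup W] [Module ℝ W]
    [FiniteDimensional ℝ W] (V : Submodule ℝ E) (L : E →ₗ[ℝ] W)
    (h : Module.finrank ℝ W < Module.finrank ℝ V) : ∃ v ∈ V, ‖v‖ = 1 ∧ L v = 0 := by
  have hker := LinearMap.ker_ne_bot_of_finrank_lt (f := L.comp V.subtype) h
  obtain ⟨x, hx, hx0⟩ := Submodule.exists_mem_ne_zero_of_ne_bot hker
  have hx0' : (x : E) ≠ 0 := by simpa using hx0
  have hLx : L x = 0 := hx
  exact ⟨(‖(x : E)‖⁻¹ : ℝ) • (x : E), V.smul_mem _ x.2, norm_smul_inv_norm hx0', by simp [hLx]⟩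

lemma exists_mem_norm_map_le_singularValues (T : E →ₗ[ℝ] F) {V : Submodule ℝ E} {k : ℕ}
    (hV : k < Module.finrank ℝ V) : ∃ v ∈ V, ‖v‖ = 1 ∧ ‖T v‖ ≤ T.singularValues k := by
  set b := T.isSymmetric_adjoint_comp_self.eigenvectorBasis rfl
  have hk : k < Module.finrank ℝ E := hV.trans_le V.finrank_le
  obtain ⟨v, hvV, hv, hbv⟩ := exists_mem_norm_eq_one_map_eq_zero V
    (LinearMap.pi fun i : Fin k => innerₛₗ ℝ (b (i.castLE hk.le))) (by simpa using hV)
  refine ⟨v, hvV, hv, le_of_pow_le_pow_left₀ two_ne_zero (T.singularValues_nonneg k) ?_⟩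
  calc ‖T v‖ ^ 2 = ∑ j : Fin _, T.singularValues j ^ 2 * inner ℝ (b j) v ^ 2 :=
        norm_map_sq_eq_sum_singularValues T v
    _ ≤ ∑ j, T.singularValues k ^ 2 * inner ℝ (b j) v ^ 2 := by
        refine Finset.sum_le_sum fun j _ => ?_
        rcases lt_or_ge j.1 k with hj | hj
        · have : inner ℝ (b j) v = 0 := congrFun hbv ⟨j, hj⟩
          simp [this]
        · gcongr
          · exact T.singularValues_nonneg _
          · exact T.singularValues_antitone hj
    _ = T.singularValues k ^ 2 := by
        simp [← Finset.mul_sum, b.sum_sq_inner_right, hv]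

lemma exists_finrank_eq_singularValues_le_norm_map (T : E →ₗ[ℝ] F) {k : ℕ}
    (hk : k < Module.finrank ℝ E) : ∃ V : Submodule ℝ E, Module.finrank ℝ V = k + 1 ∧
      ∀ v ∈ V, ‖v‖ = 1 → T.singularValues k ≤ ‖T v‖ := by
  set b := T.isSymmetric_adjoint_comp_self.eigenvectorBasis rfl
  have hli : LinearIndependent ℝ fun i : Fin (k + 1) => b (i.castLE hk) :=
    b.orthonormal.linearIndependent.comp _ (Fin.castLE_injective hk)
  refine ⟨Submodule.span ℝ (range fun i : Fin (k + 1) => b (i.castLE hk)),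
    by simpa using finrank_span_eq_card hli, fun v hv hv1 => ?_⟩
  have horth (j : Fin (Module.finrank ℝ E)) (hj : k < j) : inner ℝ (b j) v = 0 := by
    suffices h : Submodule.span ℝ (range fun i : Fin (k + 1) => b (i.castLE hk)) ≤
        LinearMap.ker (innerₛₗ ℝ (b j)) from h hv
    rw [Submodule.span_le]
    rintro _ ⟨i, rfl⟩
    refine b.orthonormal.2 fun hji => ?_
    have := congrArg Fin.val hji
    simp only [Fin.val_castLE] at this
    omega
  refine le_of_pow_le_pow_left₀ two_ne_zero (norm_nonneg _) ?_
  calc T.singularValues k ^ 2 = ∑ j, T.singularValues k ^ 2 * inner ℝ (b j) v ^ 2 := by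
        simp [← Finset.mul_sum, b.sum_sq_inner_right, hv1]
    _ ≤ ∑ j : Fin _, T.singularValues j ^ 2 * inner ℝ (b j) v ^ 2 := by
        refine Finset.sum_le_sum fun j _ => ?_
        rcases lt_or_ge k j.1 with hj | hj
        · simp [horth j hj]
        · gcongr
          · exact T.singularValues_nonneg _
          · exact T.singularValues_antitone hj
    _ = ‖T v‖ ^ 2 := (norm_map_sq_eq_sum_singularValues T v).symm

end SingularValues

section MatrixSingularValues

variable {I J K : Type*} [Fintype I] [Fintype J] [Fintype K]

lemma sInf_l2norm_mulVec_nonneg (M : Matrix I J ℝ) (V : Submodule ℝ (J → ℝ)) :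
    0 ≤ sInf {u | ∃ v ∈ V, l2norm v = 1 ∧ u = l2norm (M *ᵥ v)} :=
  Real.sInf_nonneg (by rintro u ⟨v, _, _, rfl⟩; exact l2norm_nonneg _)

lemma singularValue_nonneg (M : Matrix I J ℝ) (j : ℕ) : 0 ≤ singularValue M j :=
  Real.sSup_nonneg (by rintro t ⟨V, _, rfl⟩; exact sInf_l2norm_mulVec_nonneg M V)

lemma exists_mem_l2norm_mulVec_le [DecidableEq J] (M : Matrix I J ℝ) {V : Submodule ℝ (J → ℝ)}
    {k : ℕ} (hV : Module.finrank ℝ V = k + 1) :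
    ∃ v ∈ V, l2norm v = 1 ∧ l2norm (M *ᵥ v) ≤ (toEuclideanLin M).singularValues k := by
  let e := (WithLp.linearEquiv 2 ℝ (J → ℝ)).symm
  have hVe : k < Module.finrank ℝ (V.map e.toLinearMap) := by
    rw [LinearEquiv.finrank_map_eq e V, hV]
    exact k.lt_succ_self
  obtain ⟨_, ⟨v, hv, rfl⟩, hv1, hMv⟩ := exists_mem_norm_map_le_singularValues (toEuclideanLin M) hVe
  exact ⟨v, hv, (l2norm_eq_norm_toLp v).trans hv1, (l2norm_eq_norm_toLp _).trans_le hMv⟩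

lemma singularValues_le_singularValue [DecidableEq J] (M : Matrix I J ℝ) (k : ℕ) :
    (toEuclideanLin M).singularValues k ≤ singularValue M (k + 1) := by
  rcases lt_or_ge k (Module.finrank ℝ (EuclideanSpace ℝ J)) with hk | hk
  swap
  · rw [LinearMap.singularValues_of_finrank_le _ hk]
    exact singularValue_nonneg M _
  let e := WithLp.linearEquiv 2 ℝ (J → ℝ)
  obtain ⟨V, hV, hMV⟩ := exists_finrank_eq_singularValues_le_norm_map (toEuclideanLin M) hk
  have hVe : Module.finrank ℝ (V.map e.toLinearMap) = k + 1 :=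
    (LinearEquiv.finrank_map_eq e V).trans hV
  have hbdd : BddAbove {t | ∃ V : Submodule ℝ (J → ℝ), Module.finrank ℝ V = k + 1 ∧
      t = sInf {u | ∃ v ∈ V, l2norm v = 1 ∧ u = l2norm (M *ᵥ v)}} := by
    refine ⟨(toEuclideanLin M).singularValues k, ?_⟩
    rintro _ ⟨V', hV', rfl⟩
    obtain ⟨v, hv, hv1, hMv⟩ := exists_mem_l2norm_mulVec_le M hV'
    exact csInf_le_of_le ⟨0, by rintro _ ⟨_, _, _, rfl⟩; exact l2norm_nonneg _⟩
      ⟨v, hv, hv1, rfl⟩ hMv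
  refine le_csSup_of_le hbdd ⟨_, hVe, rfl⟩ (le_csInf ?_ ?_)
  · obtain ⟨v, hv, hv1, _⟩ := exists_mem_l2norm_mulVec_le M hVe
    exact ⟨_, v, hv, hv1, rfl⟩
  · rintro _ ⟨_, ⟨v, hv, rfl⟩, hv1, rfl⟩
    rw [l2norm_eq_norm_toLp] at hv1 ⊢
    exact hMV v hv hv1

lemma singularValue_le_singularValues [DecidableEq J] (M : Matrix I J ℝ) (k : ℕ) :
    singularValue M (k + 1) ≤ (toEuclideanLin M).singularValues k := by
  refine Real.sSup_le ?_ (LinearMap.singularValues_nonneg _ k)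
  rintro _ ⟨V, hV, rfl⟩
  obtain ⟨v, hv, hv1, hMv⟩ := exists_mem_l2norm_mulVec_le M hV
  exact csInf_le_of_le ⟨0, by rintro _ ⟨_, _, _, rfl⟩; exact l2norm_nonneg _⟩ ⟨v, hv, hv1, rfl⟩ hMv

/-- `singularValue` counts from one, Mathlib's `LinearMap.singularValues` from zero. -/
lemma singularValue_succ [DecidableEq J] (M : Matrix I J ℝ) (k : ℕ) :
    singularValue M (k + 1) = (toEuclideanLin M).singularValues k :=
  (singularValue_le_singularValues M k).antisymm (singularValues_le_singularValue M k)

lemma singularValue_eq_zero_of_rank_lt (M : Matrix I J ℝ) {i : ℕ} (h : M.rank < i) :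
    singularValue M i = 0 := by
  classical
  obtain ⟨k, rfl⟩ := Nat.exists_eq_succ_of_ne_zero h.ne_bot
  rw [Nat.succ_eq_add_one, singularValue_succ,
    LinearMap.singularValues_eq_zero_iff_le_finrank_range, toEuclideanLin_eq_toLin_orthonormal,
    ← rank_eq_finrank_range_toLin]
  exact Nat.le_of_lt_succ h

lemma sum_range_singularValue_eq_sum_rank (M : Matrix I J ℝ) {f : ℝ → ℝ} (hf : f 0 = 0) {N : ℕ}
    (hN : M.rank ≤ N) : ∑ k ∈ Finset.range N, f (singularValue M (k + 1)) =
      ∑ k ∈ Finset.range M.rank, f (singularValue M (k + 1)) := by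
  refine (Finset.sum_subset (Finset.range_mono hN) fun k _ hk => ?_).symm
  rw [singularValue_eq_zero_of_rank_lt M (Nat.lt_succ_of_le (by simpa using hk)), hf]

lemma sum_range_singularValue_sq (M : Matrix I J ℝ) {N : ℕ} (hN : M.rank ≤ N) :
    ∑ k ∈ Finset.range N, singularValue M (k + 1) ^ 2 = frobNorm M ^ 2 := by
  classical
  have hcol (j : J) : l2norm (Mᵀ j) = ‖toEuclideanLin M (EuclideanSpace.basisFun J ℝ j)‖ := by
    rw [EuclideanSpace.basisFun_apply, toLpLin_apply, l2norm_eq_norm_toLp]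
    simp [Matrix.col_def]
  calc ∑ k ∈ Finset.range N, singularValue M (k + 1) ^ 2
      = ∑ k ∈ Finset.range (Fintype.card J), (toEuclideanLin M).singularValues k ^ 2 := by
        simp only [← singularValue_succ]
        rw [sum_range_singularValue_eq_sum_rank M (f := (· ^ 2)) (zero_pow two_ne_zero) hN,
          sum_range_singularValue_eq_sum_rank M (f := (· ^ 2)) (zero_pow two_ne_zero)
            M.rank_le_card_width]
    _ = ∑ j, ‖toEuclideanLin M (EuclideanSpace.basisFun J ℝ j)‖ ^ 2 := by
        rw [← sum_singularValues_sq_eq_sum_norm_sq, finrank_euclideanSpace,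
          Fin.sum_univ_eq_sum_range fun k => (toEuclideanLin M).singularValues k ^ 2]
    _ = frobNorm M ^ 2 := by simp only [frobNorm_sq_eq_sum_col, hcol]

lemma schattenNorm_eq_sum_rank (M : Matrix I J ℝ) {q : ℝ} (hq : q ≠ 0) :
    schattenNorm M q = (∑ k ∈ Finset.range M.rank, singularValue M (k + 1) ^ q) ^ (1 / q) := by
  rw [← sum_range_singularValue_eq_sum_rank M (f := (· ^ q)) (Real.zero_rpow hq)
    (le_min M.rank_le_card_height M.rank_le_card_width), Finset.range_eq_Ico,
    Finset.sum_Ico_add' (fun i => singularValue M i ^ q), zero_add]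
  rfl

lemma schattenNorm_sq_le (M : Matrix I J ℝ) {q : ℝ} (hq : q ∈ Icc (1 : ℝ) 2) :
    schattenNorm M q ^ 2 ≤ (M.rank : ℝ) ^ (2 / q - 1) * frobNorm M ^ 2 := by
  have hq0 : 0 < q := one_pos.trans_le hq.1
  have hnonneg (k : ℕ) : 0 ≤ singularValue M (k + 1) ^ q :=
    Real.rpow_nonneg (singularValue_nonneg M _) q
  calc schattenNorm M q ^ 2
      = (∑ k ∈ Finset.range M.rank, |singularValue M (k + 1) ^ q|) ^ (2 / q) := by
        simp only [abs_of_nonneg (hnonneg _)]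
        rw [schattenNorm_eq_sum_rank M hq0.ne',
          ← Real.rpow_mul_natCast (Finset.sum_nonneg fun k _ => hnonneg k)]
        congr 1
        push_cast
        ring
    _ ≤ (M.rank : ℝ) ^ (2 / q - 1) *
          ∑ k ∈ Finset.range M.rank, |singularValue M (k + 1) ^ q| ^ (2 / q) := by
        simpa only [Finset.card_range] using
          Real.rpow_sum_le_const_mul_sum_rpow (Finset.range M.rank)
            (fun k => singularValue M (k + 1) ^ q) ((one_le_div hq0).2 hq.2)
    _ = (M.rank : ℝ) ^ (2 / q - 1) * frobNorm M ^ 2 := by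
        rw [← sum_range_singularValue_sq M le_rfl]
        simp only [abs_of_nonneg (hnonneg _), ← Real.rpow_mul (singularValue_nonneg M _),
          mul_div_cancel₀ _ hq0.ne', Real.rpow_two]

lemma l2norm_mulVec_sq (M : Matrix I J ℝ) (v : J → ℝ) :
    l2norm (M *ᵥ v) ^ 2 = v ⬝ᵥ ((Mᵀ * M) *ᵥ v) := by
  rw [l2norm_sq, ← mulVec_mulVec, dotProduct_mulVec v, vecMul_transpose]

lemma mul_one_sub_eq_zero_of_rank_le [DecidableEq J] {r : ℕ} {M : Matrix I J ℝ}
    {V : Matrix J (Fin r) ℝ} (hV : IsRightSingularVectors M V) (hr : M.rank ≤ r) :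
    M * (1 - V * Vᵀ) = 0 := by
  have hcol (j : Fin r) : l2norm ((M * V)ᵀ j) ^ 2 = singularValue M (j + 1) ^ 2 := by
    have unit : Vᵀ j ⬝ᵥ Vᵀ j = 1 := by
      simpa [Matrix.mul_apply, dotProduct] using congrFun (congrFun hV.1 j) j
    calc l2norm ((M * V)ᵀ j) ^ 2 = Vᵀ j ⬝ᵥ ((Mᵀ * M) *ᵥ Vᵀ j) := l2norm_mulVec_sq M (Vᵀ j)
      _ = singularValue M (j + 1) ^ 2 := by
        rw [show (Mᵀ * M) *ᵥ Vᵀ j = singularValue M (j + 1) ^ 2 • Vᵀ j from hV.2 j,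
          dotProduct_smul, unit, smul_eq_mul, mul_one]
  have hMV : frobNorm (M * V) ^ 2 = frobNorm M ^ 2 := by
    rw [← sum_range_singularValue_sq M hr, ← Fin.sum_univ_eq_sum_range
      fun k => singularValue M (k + 1) ^ 2, frobNorm_sq_eq_sum_col]
    exact Finset.sum_congr rfl fun j _ => hcol j
  rw [← frobNorm_eq_zero_iff, ← sq_eq_zero_iff]
  linarith [frobNorm_sq_eq_add_mul_one_sub hV.1 M]

lemma mul_l2norm_le_l2norm_vecMul {W : Matrix K K ℝ} {c : ℝ} (hc : 0 < c)
    (hW : ∀ v, c * l2norm v ≤ l2norm (W *ᵥ v)) (x : K → ℝ) :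
    c * l2norm x ≤ l2norm (x ᵥ* W) := by
  have hinj : Function.Injective W.mulVecLin := by
    rw [← LinearMap.ker_eq_bot, LinearMap.ker_eq_bot']
    intro v hv
    have hv' : W *ᵥ v = 0 := hv
    have hcv := hW v
    rw [hv', l2norm_zero] at hcv
    exact l2norm_eq_zero_iff.1 ((nonpos_of_mul_nonpos_right hcv hc).antisymm (l2norm_nonneg v))
  obtain ⟨v, rfl⟩ := LinearMap.surjective_of_injective hinj x
  rw [mulVecLin_apply]
  rcases (l2norm_nonneg (W *ᵥ v)).eq_or_lt with h0 | hpos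
  · rw [← h0, mul_zero]
    exact l2norm_nonneg _
  refine le_of_mul_le_mul_right ?_ hpos
  calc c * l2norm (W *ᵥ v) * l2norm (W *ᵥ v) = c * ((W *ᵥ v) ᵥ* W ⬝ᵥ v) := by
        rw [mul_assoc, ← pow_two, l2norm_sq, dotProduct_mulVec]
    _ ≤ c * (l2norm ((W *ᵥ v) ᵥ* W) * l2norm v) := by
        gcongr
        exact (le_abs_self _).trans (abs_dotProduct_le _ _)
    _ = l2norm ((W *ᵥ v) ᵥ* W) * (c * l2norm v) := by ring
    _ ≤ l2norm ((W *ᵥ v) ᵥ* W) * l2norm (W *ᵥ v) :=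
        mul_le_mul_of_nonneg_left (hW v) (l2norm_nonneg _)

lemma singularValue_card_mul_l2norm_le (M : Matrix I J ℝ) (v : J → ℝ) :
    singularValue M (Fintype.card J) * l2norm v ≤ l2norm (M *ᵥ v) := by
  rcases eq_or_ne v 0 with rfl | hv
  · rw [l2norm_zero, mul_zero]
    exact l2norm_nonneg _
  have hpos : 0 < l2norm v := (l2norm_nonneg v).lt_of_ne' (l2norm_eq_zero_iff.not.2 hv)
  suffices h : singularValue M (Fintype.card J) ≤ l2norm (M *ᵥ ((l2norm v)⁻¹ • v)) by
    rwa [mulVec_smul, l2norm_smul, abs_of_pos (inv_pos.2 hpos), inv_mul_eq_div,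
      le_div_iff₀ hpos] at h
  refine Real.sSup_le ?_ (l2norm_nonneg _)
  rintro _ ⟨V, hV, rfl⟩
  have hVtop : V = ⊤ :=
    Submodule.eq_top_of_finrank_eq (by rw [hV, Module.finrank_fintype_fun_eq_card])
  exact csInf_le ⟨0, by rintro _ ⟨_, _, _, rfl⟩; exact l2norm_nonneg _⟩
    ⟨_, hVtop ▸ Submodule.mem_top, l2norm_normalize hv, rfl⟩

lemma singularValue_card_mul_frobNorm_le (N : Matrix I K ℝ) (W : Matrix K K ℝ) :
    singularValue W (Fintype.card K) * frobNorm N ≤ frobNorm (N * W) := by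
  rcases (singularValue_nonneg W (Fintype.card K)).eq_or_lt with h0 | hpos
  · rw [← h0, zero_mul]
    exact frobNorm_nonneg _
  refine le_of_pow_le_pow_left₀ two_ne_zero (frobNorm_nonneg _) ?_
  rw [mul_pow, frobNorm_sq_eq_sum_row, frobNorm_sq_eq_sum_row, Finset.mul_sum]
  refine Finset.sum_le_sum fun i _ => ?_
  rw [← mul_pow]
  exact pow_le_pow_left₀ (mul_nonneg hpos.le (l2norm_nonneg _))
    (mul_l2norm_le_l2norm_vecMul hpos (singularValue_card_mul_l2norm_le W) (N i)) 2

end MatrixSingularValues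

section SparseEigenvalues

variable {n p : ℕ} {K : Type*} [Fintype K]

lemma kappaMinusSq_nonneg (X : Matrix (Fin n) (Fin p) ℝ) (k : ℕ) : 0 ≤ kappaMinusSq X k :=
  Real.sInf_nonneg (by rintro _ ⟨_, _, _, _, _, rfl⟩; exact sq_nonneg _)

lemma kappaMinusSq_eq_zero_of_lt (X : Matrix (Fin n) (Fin p) ℝ) {k : ℕ} (hk : p < k) :
    kappaMinusSq X k = 0 := by
  rw [kappaMinusSq, ← Real.sInf_empty]
  congr 1
  refine Set.eq_empty_of_forall_notMem ?_
  rintro _ ⟨B, hB, _⟩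
  exact hk.not_ge (hB ▸ card_finset_fin_le B)

lemma kappaMinusSq_le_l2norm_mulVec_sq (X : Matrix (Fin n) (Fin p) ℝ) {k : ℕ}
    {B : Finset (Fin p)} (hB : B.card ≤ k) {v : Fin p → ℝ} (hv : ∀ i ∉ B, v i = 0)
    (hunit : l2norm v = 1) : kappaMinusSq X k ≤ l2norm (X *ᵥ v) ^ 2 := by
  rcases lt_or_ge p k with hk | hk
  · exact (kappaMinusSq_eq_zero_of_lt X hk).trans_le (sq_nonneg _)
  obtain ⟨B', hBB', hB'⟩ := Finset.exists_superset_card_eq hB (by rwa [Fintype.card_fin])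
  refine csInf_le ⟨0, ?_⟩ ⟨B', hB', v, fun i hi => hv i (mt (@hBB' i) hi), hunit, rfl⟩
  rintro _ ⟨_, _, _, _, _, rfl⟩
  exact sq_nonneg _

lemma l2norm_mulVec_sq_le_kappaPlusSq (X : Matrix (Fin n) (Fin p) ℝ) {k : ℕ} (hk : k ≤ p)
    {B : Finset (Fin p)} (hB : B.card ≤ k) {v : Fin p → ℝ} (hv : ∀ i ∉ B, v i = 0)
    (hunit : l2norm v = 1) : l2norm (X *ᵥ v) ^ 2 ≤ kappaPlusSq X k := by
  obtain ⟨B', hBB', hB'⟩ := Finset.exists_superset_card_eq hB (by rwa [Fintype.card_fin])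
  refine le_csSup ⟨‖(toEuclideanLin X).toContinuousLinearMap‖ ^ 2, ?_⟩
    ⟨B', hB', v, fun i hi => hv i (mt (@hBB' i) hi), hunit, rfl⟩
  rintro _ ⟨_, _, u, _, hu, rfl⟩
  refine pow_le_pow_left₀ (l2norm_nonneg _) ?_ 2
  have h := (toEuclideanLin X).toContinuousLinearMap.le_opNorm (WithLp.toLp 2 u)
  rwa [← l2norm_eq_norm_toLp u, hu, mul_one, LinearMap.coe_toContinuousLinearMap', toLpLin_toLp,
    ← l2norm_eq_norm_toLp] at h

lemma kappaMinusSq_le_kappaPlusSq (X : Matrix (Fin n) (Fin p) ℝ) {k k' : ℕ} (hk' : 1 ≤ k')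
    (hk : 1 ≤ k) (hkp : k ≤ p) : kappaMinusSq X k' ≤ kappaPlusSq X k := by
  obtain ⟨i⟩ : Nonempty (Fin p) := Fin.pos_iff_nonempty.1 (hk.trans hkp)
  have hsupp : ∀ j ∉ ({i} : Finset (Fin p)), (Pi.single i 1 : Fin p → ℝ) j = 0 := fun j hj =>
    Pi.single_eq_of_ne (Finset.notMem_singleton.1 hj) 1
  have hunit : l2norm (Pi.single i 1 : Fin p → ℝ) = 1 := by
    simp [l2norm, Pi.single_apply]
  exact (kappaMinusSq_le_l2norm_mulVec_sq X (B := {i}) hk' hsupp hunit).trans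
    (l2norm_mulVec_sq_le_kappaPlusSq X hkp (B := {i}) hk hsupp hunit)

lemma l2norm_mulVec_normalize_sq (X : Matrix (Fin n) (Fin p) ℝ) (v : Fin p → ℝ) :
    l2norm (X *ᵥ ((l2norm v)⁻¹ • v)) ^ 2 * l2norm v ^ 2 = l2norm (X *ᵥ v) ^ 2 := by
  rcases eq_or_ne v 0 with rfl | hv
  · simp [l2norm_zero]
  rw [← mul_pow, mulVec_smul, l2norm_smul, abs_of_nonneg (inv_nonneg.2 (l2norm_nonneg v)),
    mul_right_comm, inv_mul_cancel₀ (l2norm_eq_zero_iff.not.2 hv), one_mul]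

lemma kappaMinusSq_mul_frobNorm_sq_le (X : Matrix (Fin n) (Fin p) ℝ) {k : ℕ}
    {B : Finset (Fin p)} (hB : B.card ≤ k) {D : Matrix (Fin p) K ℝ} (hD : ∀ i ∉ B, D i = 0) :
    kappaMinusSq X k * frobNorm D ^ 2 ≤ frobNorm (X * D) ^ 2 := by
  rw [frobNorm_sq_eq_sum_col, frobNorm_sq_eq_sum_col, Finset.mul_sum]
  refine Finset.sum_le_sum fun j _ => ?_
  change _ ≤ l2norm (X *ᵥ Dᵀ j) ^ 2
  rcases eq_or_ne (Dᵀ j) 0 with h0 | h0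
  · simp [h0, l2norm_zero]
  rw [← l2norm_mulVec_normalize_sq]
  gcongr
  refine kappaMinusSq_le_l2norm_mulVec_sq X hB (fun i hi => ?_) (l2norm_normalize h0)
  rw [Pi.smul_apply, transpose_apply, hD i hi, Pi.zero_apply, smul_zero]

lemma frobNorm_mul_sq_le_kappaPlusSq (X : Matrix (Fin n) (Fin p) ℝ) {k : ℕ} (hk : k ≤ p)
    {B : Finset (Fin p)} (hB : B.card ≤ k) {D : Matrix (Fin p) K ℝ} (hD : ∀ i ∉ B, D i = 0) :
    frobNorm (X * D) ^ 2 ≤ kappaPlusSq X k * frobNorm D ^ 2 := by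
  rw [frobNorm_sq_eq_sum_col, frobNorm_sq_eq_sum_col, Finset.mul_sum]
  refine Finset.sum_le_sum fun j _ => ?_
  change l2norm (X *ᵥ Dᵀ j) ^ 2 ≤ _
  rcases eq_or_ne (Dᵀ j) 0 with h0 | h0
  · simp [h0, l2norm_zero]
  rw [← l2norm_mulVec_normalize_sq]
  gcongr
  refine l2norm_mulVec_sq_le_kappaPlusSq X hk hB (fun i hi => ?_) (l2norm_normalize h0)
  rw [Pi.smul_apply, transpose_apply, hD i hi, Pi.zero_apply, smul_zero]

lemma frobInner_eq_zero_of_disjoint {B B' : Finset (Fin p)} (hBB' : Disjoint B B')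
    {D E : Matrix (Fin p) K ℝ} (hD : ∀ i ∉ B, D i = 0) (hE : ∀ i ∉ B', E i = 0) :
    frobInner D E = 0 := by
  refine Finset.sum_eq_zero fun j _ => ?_
  rw [diag_apply, Matrix.mul_apply]
  refine Finset.sum_eq_zero fun i _ => ?_
  by_cases hi : i ∈ B
  · rw [hE i (Finset.disjoint_left.1 hBB' hi), Pi.zero_apply, mul_zero]
  · rw [transpose_apply, hD i hi, Pi.zero_apply, zero_mul]

lemma neg_frobInner_mul_le (X : Matrix (Fin n) (Fin p) ℝ) {k : ℕ} (hk : k ≤ p)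
    {B B' : Finset (Fin p)} (hB : B.card ≤ k) (hB' : B'.card ≤ k) (hBB' : Disjoint B B')
    {D E : Matrix (Fin p) K ℝ} (hD : ∀ i ∉ B, D i = 0) (hE : ∀ i ∉ B', E i = 0) :
    -frobInner (X * D) (X * E) ≤
      (kappaPlusSq X k - kappaMinusSq X (2 * k)) * (frobNorm D * frobNorm E) := by
  classical
  set u := frobNorm D with hu
  set w := frobNorm E with hw
  rcases (mul_nonneg (frobNorm_nonneg D) (frobNorm_nonneg E)).eq_or_lt with h0 | hpos
  · rcases mul_eq_zero.1 h0.symm with h | h <;> rw [frobNorm_eq_zero_iff] at h <;>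
      simp [hu, hw, h, frobInner, frobNorm_eq_zero_iff.2]
  have expand : ∀ {I : Type} [Fintype I] (M N : Matrix I K ℝ), frobNorm (w • M + u • N) ^ 2 =
      w ^ 2 * frobNorm M ^ 2 + 2 * (u * w) * frobInner M N + u ^ 2 * frobNorm N ^ 2 := by
    intro I _ M N
    rw [frobNorm_add_sq, frobNorm_smul, frobNorm_smul, frobInner_smul_right,
      frobInner_comm, frobInner_smul_right, frobInner_comm, mul_pow, mul_pow, sq_abs, sq_abs]
    ring
  have lower : kappaMinusSq X (2 * k) * (2 * (u * w) ^ 2) ≤ w ^ 2 * frobNorm (X * D) ^ 2 +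
      2 * (u * w) * frobInner (X * D) (X * E) + u ^ 2 * frobNorm (X * E) ^ 2 := by
    have h := kappaMinusSq_mul_frobNorm_sq_le X (k := 2 * k) (B := B ∪ B') (D := w • D + u • E)
      ((Finset.card_union_le _ _).trans (by omega)) (fun i hi => by
        rw [Finset.mem_union, not_or] at hi
        change w • D i + u • E i = 0
        rw [hD i hi.1, hE i hi.2, smul_zero, smul_zero, add_zero])
    rw [Matrix.mul_add, Matrix.mul_smul, Matrix.mul_smul, expand, expand,
      frobInner_eq_zero_of_disjoint hBB' hD hE, ← hu, ← hw] at h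
    exact (congrArg _ (by ring)).trans_le h
  have upperD := mul_le_mul_of_nonneg_left (frobNorm_mul_sq_le_kappaPlusSq X hk hB hD)
    (sq_nonneg w)
  have upperE := mul_le_mul_of_nonneg_left (frobNorm_mul_sq_le_kappaPlusSq X hk hB' hE)
    (sq_nonneg u)
  refine le_of_mul_le_mul_left ?_ hpos
  linarith

lemma abs_frobInner_mul_le (X : Matrix (Fin n) (Fin p) ℝ) {k : ℕ} (hk : k ≤ p)
    {B B' : Finset (Fin p)} (hB : B.card ≤ k) (hB' : B'.card ≤ k) (hBB' : Disjoint B B')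
    {D E : Matrix (Fin p) K ℝ} (hD : ∀ i ∉ B, D i = 0) (hE : ∀ i ∉ B', E i = 0) :
    |frobInner (X * D) (X * E)| ≤
      (kappaPlusSq X k - kappaMinusSq X (2 * k)) * (frobNorm D * frobNorm E) := by
  refine abs_le'.2 ⟨?_, neg_frobInner_mul_le X hk hB hB' hBB' hD hE⟩
  have h := neg_frobInner_mul_le X hk hB hB' hBB' hD (E := (-1 : ℝ) • E) fun i hi => by
    change (-1 : ℝ) • E i = 0
    rw [hE i hi, smul_zero]
  rwa [Matrix.mul_smul, frobInner_smul_right, neg_one_mul, neg_neg, neg_one_smul,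
    frobNorm_neg] at h

end SparseEigenvalues

section Shelling

variable {ι : Type*}

lemma sqrt_sum_sq_le_sum_div_sqrt {w : ι → ℝ} (hw : ∀ i, 0 ≤ w i) {l : ℕ} (hl : 0 < l)
    {J J' : Finset ι} (hJ : J.card = l) (hJ' : J'.card ≤ l) (hle : ∀ i ∈ J, ∀ j ∈ J', w j ≤ w i) :
    √(∑ j ∈ J', w j ^ 2) ≤ (∑ i ∈ J, w i) / √l := by
  obtain ⟨x, hx, hmin⟩ := Finset.exists_min_image J w (Finset.card_pos.1 (hJ ▸ hl))
  have hsqrt : 0 < √(l : ℝ) := Real.sqrt_pos.2 (Nat.cast_pos.2 hl)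
  calc √(∑ j ∈ J', w j ^ 2) ≤ √(l * w x ^ 2) := by
        refine Real.sqrt_le_sqrt ?_
        calc ∑ j ∈ J', w j ^ 2 ≤ J'.card • w x ^ 2 :=
              Finset.sum_le_card_nsmul _ _ _ fun j hj => pow_le_pow_left₀ (hw j) (hle x hx j hj) 2
          _ ≤ l * w x ^ 2 := by
              rw [nsmul_eq_mul]
              gcongr
    _ = J.card • w x / √l := by
        rw [Real.sqrt_mul (Nat.cast_nonneg l), Real.sqrt_sq (hw x), hJ, nsmul_eq_mul,
          eq_div_iff hsqrt.ne', mul_right_comm, Real.mul_self_sqrt (Nat.cast_nonneg l)]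
    _ ≤ (∑ i ∈ J, w i) / √l := by
        gcongr
        exact Finset.card_nsmul_le_sum _ _ _ hmin

variable [DecidableEq ι]

lemma exists_subset_card_eq_forall_sdiff_le (w : ι → ℝ) {R : Finset ι} {l : ℕ}
    (hl : l ≤ R.card) : ∃ J ⊆ R, J.card = l ∧ ∀ i ∈ J, ∀ j ∈ R \ J, w j ≤ w i := by
  induction l with
  | zero => exact ⟨∅, by simp⟩
  | succ l ih =>
    obtain ⟨J, hJR, hJcard, hJ⟩ := ih (Nat.le_of_succ_le hl)
    have rest_nonempty : (R \ J).Nonempty := by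
      rw [← Finset.card_pos, Finset.card_sdiff_of_subset hJR]
      omega
    obtain ⟨x, hx, hmax⟩ := Finset.exists_max_image (R \ J) w rest_nonempty
    rw [Finset.mem_sdiff] at hx
    refine ⟨insert x J, Finset.insert_subset hx.1 hJR, ?_, fun i hi j hj => ?_⟩
    · rw [Finset.card_insert_of_notMem hx.2, hJcard]
    · have hj' := Finset.sdiff_subset_sdiff subset_rfl (Finset.subset_insert x J) hj
      rcases Finset.mem_insert.1 hi with rfl | hi
      · exact hmax j hj'
      · exact hJ i hi j hj'

-- Each block is charged to the preceding block of larger weights; the first block `J` is free.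
lemma exists_shelling {w : ι → ℝ} (hw : ∀ i, 0 ≤ w i) {l : ℕ} (hl : 0 < l) (R : Finset ι) :
    ∃ J ⊆ R, J.card ≤ l ∧ ∃ P : Finpartition (R \ J), (∀ B ∈ P.parts, B.card ≤ l) ∧
      ∑ B ∈ P.parts, √(∑ i ∈ B, w i ^ 2) ≤ (∑ i ∈ R, w i) / √l := by
  induction R using Finset.strongInduction with
  | H R ih =>
  rcases le_or_gt R.card l with hR | hR
  · refine ⟨R, subset_rfl, hR, (Finpartition.empty _).copy (Finset.sdiff_self R).symm, ?_⟩
    simpa using div_nonneg (Finset.sum_nonneg fun i _ => hw i) (Real.sqrt_nonneg l)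
  obtain ⟨J, hJR, hJcard, hJ⟩ := exists_subset_card_eq_forall_sdiff_le w hR.le
  have hJne : J.Nonempty := Finset.card_pos.1 (hJcard ▸ hl)
  obtain ⟨J', hJ', hJ'card, P, hPcard, hPsum⟩ := ih (R \ J) (Finset.sdiff_ssubset hJR hJne)
  refine ⟨J, hJR, hJcard.le, ?_⟩
  have head := sqrt_sum_sq_le_sum_div_sqrt hw hl hJcard hJ'card fun i hi j hj => hJ i hi j (hJ' hj)
  rcases J'.eq_empty_or_nonempty with rfl | hJ'ne
  · refine ⟨P.copy Finset.sdiff_empty, hPcard, hPsum.trans ?_⟩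
    gcongr
    exacts [fun i _ _ => hw i, Finset.sdiff_subset]
  have hdisj : Disjoint ((R \ J) \ J') J' := Finset.sdiff_disjoint
  refine ⟨P.extend hJ'ne.ne_empty hdisj (Finset.sdiff_union_of_subset hJ'), ?_, ?_⟩
  · simpa only [Finpartition.extend_parts, Finset.forall_mem_insert] using ⟨hJ'card, hPcard⟩
  have hnotMem : J' ∉ P.parts := fun h =>
    hJ'ne.ne_empty (disjoint_self.1 (hdisj.mono_left (P.le h)))
  rw [Finpartition.extend_parts, Finset.sum_insert hnotMem, ← Finset.sum_sdiff hJR, add_div,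
    add_comm]
  exact add_le_add hPsum head

end Shelling

section RestrictedEigenvalue

variable {I K : Type*} [DecidableEq I]

/-- The matrix `D` with its rows outside `J` replaced by zero. -/
def restrictRows (J : Finset I) (D : Matrix I K ℝ) : Matrix I K ℝ :=
  of fun i j => if i ∈ J then D i j else 0

lemma restrictRows_apply_of_mem {J : Finset I} (D : Matrix I K ℝ) {i : I} (hi : i ∈ J) :
    restrictRows J D i = D i :=
  funext fun _ => if_pos hi

lemma restrictRows_apply_of_notMem {J : Finset I} (D : Matrix I K ℝ) {i : I} (hi : i ∉ J) :
    restrictRows J D i = 0 :=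
  funext fun _ => if_neg hi

variable [Fintype I]

lemma restrictRows_add_sum_parts {T : Finset I} (P : Finpartition Tᶜ) (D : Matrix I K ℝ) :
    restrictRows T D + ∑ B ∈ P.parts, restrictRows B D = D := by
  ext i j
  have hsum : ∑ B ∈ P.parts, (if i ∈ B then D i j else 0) = if i ∈ Tᶜ then D i j else 0 :=
    calc ∑ B ∈ P.parts, (if i ∈ B then D i j else 0)
        = ∑ B ∈ P.parts, ∑ l ∈ B, if l = i then D i j else 0 := by
          simp only [Finset.sum_ite_eq']
      _ = ∑ l ∈ P.parts.biUnion id, if l = i then D i j else 0 :=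
          (Finset.sum_biUnion P.supIndep.pairwiseDisjoint).symm
      _ = _ := by rw [P.biUnion_parts, Finset.sum_ite_eq']
  simp only [Matrix.add_apply, Matrix.sum_apply, restrictRows, of_apply, hsum]
  by_cases hi : i ∈ T <;> simp [hi]

variable [Fintype K]

lemma frobNorm_restrictRows (J : Finset I) (D : Matrix I K ℝ) :
    frobNorm (restrictRows J D) = √(∑ i ∈ J, l2norm (D i) ^ 2) := by
  rw [← Real.sqrt_sq (frobNorm_nonneg _), frobNorm_sq_eq_sum_row,
    ← Finset.sum_subset (Finset.subset_univ J) fun i _ hi => by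
      rw [restrictRows_apply_of_notMem D hi, l2norm_zero, zero_pow two_ne_zero]]
  exact congrArg _ (Finset.sum_congr rfl fun i hi => by rw [restrictRows_apply_of_mem D hi])

lemma sum_l2norm_le_sqrt_mul_frobNorm_restrictRows {S T : Finset I} (hST : S ⊆ T) {s : ℕ}
    (hS : S.card ≤ s) (D : Matrix I K ℝ) :
    ∑ i ∈ S, l2norm (D i) ≤ √s * frobNorm (restrictRows T D) := by
  rw [frobNorm_restrictRows, ← Real.sqrt_mul (Nat.cast_nonneg s)]
  refine Real.le_sqrt_of_sq_le (sq_sum_le_card_mul_sum_sq.trans ?_)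
  gcongr

lemma frobNorm_le_add_sum_parts {T : Finset I} (P : Finpartition Tᶜ) (D : Matrix I K ℝ) :
    frobNorm D ≤ frobNorm (restrictRows T D) + ∑ B ∈ P.parts, frobNorm (restrictRows B D) := by
  conv_lhs => rw [← restrictRows_add_sum_parts P D]
  refine (frobNorm_add_le _ _).trans (add_le_add_right ?_ _)
  exact Finset.le_sum_of_subadditive frobNorm (frobNorm_eq_zero_iff.2 rfl).le frobNorm_add_le _ _

end RestrictedEigenvalue

/-- The lower half of the sparse eigenvalue condition `SE(k, c, K)`, with the value `a` of `κ₋(k)`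
in place of its lower bound `K⁻¹`, together with the assumptions that relate `k` and `c` to the row
sparsity `s`. -/
structure SparseEigenCondition {n p : ℕ} (X : Matrix (Fin n) (Fin p) ℝ) (s k : ℕ) (a c : ℝ) :
    Prop where
  sparsity_pos : 0 < s
  two_mul_le : 2 * s ≤ k
  kappaMinus_eq : kappaMinus X k = a
  kappaMinus_pos : 0 < a
  ratio_pos : 0 < c
  six_mul_le : 6 * c ≤ √((k : ℝ) / s - 1)
  ratio_lt : (kappaPlusSq X k - kappaMinusSq X (2 * k)) / kappaMinusSq X k < c

namespace SparseEigenCondition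

variable {n p s k : ℕ} {a c : ℝ} {X : Matrix (Fin n) (Fin p) ℝ} {K : Type*} [Fintype K]
  (h : SparseEigenCondition X s k a c)
include h

lemma kappaMinusSq_eq : kappaMinusSq X k = a ^ 2 := by
  rw [← h.kappaMinus_eq, kappaMinus, Real.sq_sqrt (kappaMinusSq_nonneg X k)]

lemma le_card : k ≤ p := by
  by_contra! hk
  exact (pow_pos h.kappaMinus_pos 2).ne (h.kappaMinusSq_eq ▸ kappaMinusSq_eq_zero_of_lt X hk).symm

lemma one_le : 1 ≤ k := by
  have := h.sparsity_pos
  have := h.two_mul_le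
  omega

lemma restrictedOrthogonality_nonneg : 0 ≤ kappaPlusSq X k - kappaMinusSq X (2 * k) :=
  sub_nonneg.2 (kappaMinusSq_le_kappaPlusSq X (by have := h.one_le; omega) h.one_le h.le_card)

lemma restrictedOrthogonality_le : kappaPlusSq X k - kappaMinusSq X (2 * k) ≤ c * a ^ 2 := by
  have hlt := h.ratio_lt
  rw [h.kappaMinusSq_eq, div_lt_iff₀ (pow_pos h.kappaMinus_pos 2)] at hlt
  exact hlt.le

lemma six_mul_sqrt_le : 6 * c * √s ≤ √(k - s : ℕ) := by
  have hs : (0 : ℝ) < s := Nat.cast_pos.2 h.sparsity_pos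
  have hle := h.six_mul_le
  rwa [div_sub_one hs.ne', Real.sqrt_div' _ hs.le, le_div_iff₀ (Real.sqrt_pos.2 hs),
    ← Nat.cast_sub (by have := h.two_mul_le; omega)] at hle

lemma mul_frobNorm_le {B : Finset (Fin p)} (hB : B.card ≤ k) {D : Matrix (Fin p) K ℝ}
    (hD : ∀ i ∉ B, D i = 0) : a * frobNorm D ≤ frobNorm (X * D) := by
  refine le_of_pow_le_pow_left₀ two_ne_zero (frobNorm_nonneg _) ?_
  rw [mul_pow, ← h.kappaMinusSq_eq]
  exact kappaMinusSq_mul_frobNorm_sq_le X hB hD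

lemma le_l2norm_col (j : Fin p) : a ≤ l2norm (Xᵀ j) := by
  refine le_of_pow_le_pow_left₀ two_ne_zero (l2norm_nonneg _) ?_
  rw [← h.kappaMinusSq_eq, show Xᵀ j = X *ᵥ Pi.single j 1 from (mulVec_single_one X j).symm]
  refine kappaMinusSq_le_l2norm_mulVec_sq X (B := {j}) h.one_le (fun i hi => ?_) ?_
  · exact Pi.single_eq_of_ne (Finset.notMem_singleton.1 hi) 1
  · simp [l2norm, Pi.single_apply]

variable {S : Finset (Fin p)} (hS : S.card ≤ s) {D : Matrix (Fin p) K ℝ}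
  (hcone : ∑ i ∈ Sᶜ, l2norm (D i) ≤ 3 * ∑ i ∈ S, l2norm (D i))
include hS hcone

lemma exists_shelling_of_cone : ∃ T, S ⊆ T ∧ T.card ≤ k ∧ ∃ P : Finpartition Tᶜ,
    (∀ B ∈ P.parts, B.card ≤ k) ∧
      ∑ B ∈ P.parts, frobNorm (restrictRows B D) ≤ frobNorm (restrictRows T D) / (2 * c) := by
  have hc := h.ratio_pos
  have hl : 0 < k - s := by
    have := h.sparsity_pos
    have := h.two_mul_le
    omega
  obtain ⟨J, _, hJcard, P, hPcard, hPsum⟩ :=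
    exists_shelling (fun i => l2norm_nonneg (D i)) hl Sᶜ
  have hcompl : Sᶜ \ J = (S ∪ J)ᶜ := by rw [Finset.compl_union, Finset.sdiff_eq_inter_compl]
  refine ⟨S ∪ J, Finset.subset_union_left, ?_, P.copy hcompl,
    fun B hB => (hPcard B hB).trans (Nat.sub_le k s), ?_⟩
  · have := Finset.card_union_le S J
    have := h.two_mul_le
    omega
  simp only [← frobNorm_restrictRows] at hPsum
  refine hPsum.trans ((div_le_div_iff₀ (Real.sqrt_pos.2 (Nat.cast_pos.2 hl)) (by positivity)).2 ?_)
  calc (∑ i ∈ Sᶜ, l2norm (D i)) * (2 * c)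
      ≤ 3 * (√s * frobNorm (restrictRows (S ∪ J) D)) * (2 * c) := by
        gcongr
        refine hcone.trans (mul_le_mul_of_nonneg_left ?_ zero_le_three)
        exact sum_l2norm_le_sqrt_mul_frobNorm_restrictRows Finset.subset_union_left hS D
    _ = frobNorm (restrictRows (S ∪ J) D) * (6 * c * √s) := by ring
    _ ≤ _ := mul_le_mul_of_nonneg_left h.six_mul_sqrt_le (frobNorm_nonneg _)

omit hS hcone

lemma abs_frobInner_restrictRows_le {T : Finset (Fin p)} (hT : T.card ≤ k)
    {P : Finpartition Tᶜ} (hPcard : ∀ B ∈ P.parts, B.card ≤ k) (hPsum :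
      ∑ B ∈ P.parts, frobNorm (restrictRows B D) ≤ frobNorm (restrictRows T D) / (2 * c)) :
    |frobInner (X * restrictRows T D) (X * ∑ B ∈ P.parts, restrictRows B D)| ≤
      (a * frobNorm (restrictRows T D)) ^ 2 / 2 := by
  have hc := h.ratio_pos
  set t := frobNorm (restrictRows T D)
  have ht : 0 ≤ t := frobNorm_nonneg _
  set δ := kappaPlusSq X k - kappaMinusSq X (2 * k)
  have : 0 ≤ δ := h.restrictedOrthogonality_nonneg
  have numeric (x : ℝ) : c * a ^ 2 * (x * (x / (2 * c))) = (a * x) ^ 2 / 2 := by field_simp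
  have block : ∀ B ∈ P.parts, |frobInner (X * restrictRows T D) (X * restrictRows B D)| ≤
      δ * (t * frobNorm (restrictRows B D)) := fun B hB =>
    abs_frobInner_mul_le X h.le_card hT (hPcard B hB)
      (disjoint_compl_right.mono_right (P.le hB))
      (fun i hi => restrictRows_apply_of_notMem D hi)
      (fun i hi => restrictRows_apply_of_notMem D hi)
  calc |frobInner (X * restrictRows T D) (X * ∑ B ∈ P.parts, restrictRows B D)|
      ≤ ∑ B ∈ P.parts, |frobInner (X * restrictRows T D) (X * restrictRows B D)| := by
        rw [Matrix.mul_sum, frobInner_sum_right]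
        exact Finset.abs_sum_le_sum_abs _ _
    _ ≤ ∑ B ∈ P.parts, δ * (t * frobNorm (restrictRows B D)) := Finset.sum_le_sum block
    _ = δ * (t * ∑ B ∈ P.parts, frobNorm (restrictRows B D)) := by
        rw [Finset.mul_sum, Finset.mul_sum]
    _ ≤ c * a ^ 2 * (t * (t / (2 * c))) :=
        mul_le_mul h.restrictedOrthogonality_le (mul_le_mul_of_nonneg_left hPsum ht)
          (mul_nonneg ht (Finset.sum_nonneg fun B _ => frobNorm_nonneg _)) (by positivity)
    _ = (a * t) ^ 2 / 2 := numeric t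

lemma half_mul_frobNorm_restrictRows_le {T : Finset (Fin p)} (hT : T.card ≤ k)
    {P : Finpartition Tᶜ} (hPcard : ∀ B ∈ P.parts, B.card ≤ k) (hPsum :
      ∑ B ∈ P.parts, frobNorm (restrictRows B D) ≤ frobNorm (restrictRows T D) / (2 * c)) :
    a / 2 * frobNorm (restrictRows T D) ≤ frobNorm (X * D) := by
  set y := frobNorm (X * restrictRows T D)
  have lower : a * frobNorm (restrictRows T D) ≤ y :=
    h.mul_frobNorm_le hT fun i hi => restrictRows_apply_of_notMem D hi
  have cross : |frobInner (X * restrictRows T D) (X * ∑ B ∈ P.parts, restrictRows B D)| ≤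
      y ^ 2 / 2 := by
    refine (h.abs_frobInner_restrictRows_le hT hPcard hPsum).trans ?_
    have := mul_nonneg h.kappaMinus_pos.le (frobNorm_nonneg (restrictRows T D))
    gcongr
  have upper : y ^ 2 + frobInner (X * restrictRows T D) (X * ∑ B ∈ P.parts, restrictRows B D) ≤
      y * frobNorm (X * D) := by
    rw [frobNorm_sq_eq_frobInner, ← frobInner_add_right, ← Matrix.mul_add,
      restrictRows_add_sum_parts]
    exact (le_abs_self _).trans (abs_frobInner_le _ _)
  have half : y / 2 ≤ frobNorm (X * D) := by
    rcases (frobNorm_nonneg (X * restrictRows T D)).eq_or_lt with h0 | hpos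
    · exact (congrArg (· / 2) h0.symm).trans_le ((zero_div 2).trans_le (frobNorm_nonneg _))
    · refine le_of_mul_le_mul_left ?_ hpos
      linarith [neg_le_of_abs_le cross]
  linarith

include hS hcone

lemma exists_restrictedEigenvalue_of_cone : ∃ t : ℝ, ∑ i ∈ S, l2norm (D i) ≤ √s * t ∧
    a / 2 * t ≤ frobNorm (X * D) ∧ frobNorm D ≤ (1 + 1 / (2 * c)) * t := by
  obtain ⟨T, hST, hT, P, hPcard, hPsum⟩ := h.exists_shelling_of_cone hS hcone
  refine ⟨frobNorm (restrictRows T D),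
    sum_l2norm_le_sqrt_mul_frobNorm_restrictRows hST hS D,
    h.half_mul_frobNorm_restrictRows_le hT hPcard hPsum, ?_⟩
  calc frobNorm D
      ≤ frobNorm (restrictRows T D) + ∑ B ∈ P.parts, frobNorm (restrictRows B D) :=
        frobNorm_le_add_sum_parts P D
    _ ≤ frobNorm (restrictRows T D) + frobNorm (restrictRows T D) / (2 * c) := by gcongr
    _ = (1 + 1 / (2 * c)) * frobNorm (restrictRows T D) := by ring

end SparseEigenCondition

section GroupLasso

variable {I J K : Type*} [Fintype I] [Fintype J] [Fintype K]

lemma l2norm_add_le (v w : I → ℝ) : l2norm (v + w) ≤ l2norm v + l2norm w := by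
  simpa only [l2norm_eq_norm_toLp, WithLp.toLp_add] using norm_add_le _ _

lemma frobInner_le_mul_norm21 {E : Matrix I J ℝ} {c : ℝ} (hE : ∀ i, l2norm (E i) ≤ c)
    (D : Matrix I J ℝ) : frobInner E D ≤ c * norm21 D := by
  calc frobInner E D = ∑ i, E i ⬝ᵥ D i := by
        rw [frobInner, ← transpose_transpose D, ← trace_transpose, ← transpose_mul,
          transpose_transpose, trace_mul_comm]
        rfl
    _ ≤ ∑ i, l2norm (E i) * l2norm (D i) :=
        Finset.sum_le_sum fun i _ => (le_abs_self _).trans (abs_dotProduct_le _ _)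
    _ ≤ c * norm21 D := by
        rw [norm21, Finset.mul_sum]
        exact Finset.sum_le_sum fun i _ => mul_le_mul_of_nonneg_right (hE i) (l2norm_nonneg _)

lemma norm21_sub_norm21_add_le [DecidableEq I] {S : Finset I} {B : Matrix I J ℝ}
    (hB : ∀ i ∉ S, B i = 0) (D : Matrix I J ℝ) :
    norm21 B - norm21 (B + D) ≤ ∑ i ∈ S, l2norm (D i) - ∑ i ∈ Sᶜ, l2norm (D i) := by
  have onS : ∑ i ∈ S, l2norm (B i) ≤ ∑ i ∈ S, (l2norm ((B + D) i) + l2norm (D i)) := by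
    refine Finset.sum_le_sum fun i _ => ?_
    calc l2norm (B i) = l2norm ((B + D) i + (-1 : ℝ) • D i) := by
          rw [neg_one_smul, show (B + D) i = B i + D i from rfl, add_neg_cancel_right]
      _ ≤ l2norm ((B + D) i) + l2norm ((-1 : ℝ) • D i) := l2norm_add_le _ _
      _ = l2norm ((B + D) i) + l2norm (D i) := by
          rw [l2norm_smul, abs_neg, abs_one, one_mul]
  have offS : ∑ i ∈ Sᶜ, l2norm ((B + D) i) = ∑ i ∈ Sᶜ, l2norm (D i) :=
    Finset.sum_congr rfl fun i hi => by
      rw [show (B + D) i = B i + D i from rfl, hB i (Finset.mem_compl.1 hi), zero_add]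
  have zero_offS : ∑ i ∈ Sᶜ, l2norm (B i) = 0 := Finset.sum_eq_zero fun i hi => by
    rw [hB i (Finset.mem_compl.1 hi), l2norm_zero]
  rw [norm21, norm21, ← Finset.sum_add_sum_compl S, ← Finset.sum_add_sum_compl S, offS, zero_offS]
  rw [Finset.sum_add_distrib] at onS
  linarith

/-- `B` minimizes the group Lasso objective with design `X`, response `W` and penalty level
`lam`. -/
def IsGroupLassoMinimizer (X : Matrix I J ℝ) (W : Matrix I K ℝ) (lam : ℝ) (B : Matrix J K ℝ) :
    Prop :=
  ∀ B' : Matrix J K ℝ, frobNorm (W - X * B) ^ 2 / 2 + lam * norm21 B ≤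
    frobNorm (W - X * B') ^ 2 / 2 + lam * norm21 B'

namespace IsGroupLassoMinimizer

lemma frobNorm_mul_sub_sq_add_le [DecidableEq J] {X : Matrix I J ℝ} {E : Matrix I K ℝ}
    {lam : ℝ} {Bstar B : Matrix J K ℝ} (hmin : IsGroupLassoMinimizer X (X * Bstar + E) lam B)
    (hlam : 0 ≤ lam) {S : Finset J} (hBstar : ∀ i ∉ S, Bstar i = 0)
    (hE : ∀ i, l2norm ((Xᵀ * E) i) ≤ lam / 2) :
    frobNorm (X * (B - Bstar)) ^ 2 + lam * ∑ i ∈ Sᶜ, l2norm ((B - Bstar) i) ≤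
      3 * lam * ∑ i ∈ S, l2norm ((B - Bstar) i) := by
  obtain ⟨D, rfl⟩ : ∃ D, B = Bstar + D := ⟨B - Bstar, (add_sub_cancel _ _).symm⟩
  rw [add_sub_cancel_left]
  have comparison : frobNorm (E - X * D) ^ 2 / 2 + lam * norm21 (Bstar + D) ≤
      frobNorm E ^ 2 / 2 + lam * norm21 Bstar := by
    simpa only [Matrix.mul_add, add_sub_add_left_eq_sub, add_sub_cancel_left] using hmin Bstar
  have expand : frobNorm (E - X * D) ^ 2 =
      frobNorm (X * D) ^ 2 - 2 * frobInner (Xᵀ * E) D + frobNorm E ^ 2 := by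
    rw [sub_eq_neg_add, frobNorm_add_sq, frobNorm_neg, ← neg_one_smul ℝ (X * D), frobInner_comm,
      frobInner_smul_right, frobInner_comm, frobInner_mul_left, frobInner_comm]
    ring
  have noise := frobInner_le_mul_norm21 hE D
  have penalty := mul_le_mul_of_nonneg_left (norm21_sub_norm21_add_le hBstar D) hlam
  rw [norm21, ← Finset.sum_add_sum_compl S] at noise
  linarith

variable {n p s k : ℕ} {a c lam : ℝ} {X : Matrix (Fin n) (Fin p) ℝ}
  {E : Matrix (Fin n) K ℝ} {Bstar B : Matrix (Fin p) K ℝ}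

lemma frobNorm_le (hmin : IsGroupLassoMinimizer X (X * Bstar + E) lam B) (hlam : 0 < lam)
    (hX : SparseEigenCondition X s k a c) {S : Finset (Fin p)} (hS : S.card ≤ s)
    (hBstar : ∀ i ∉ S, Bstar i = 0) (hE : ∀ i, l2norm ((Xᵀ * E) i) ≤ lam / 2) :
    frobNorm (X * (B - Bstar)) ≤ 6 * (√s * lam) / a ∧
      frobNorm (B - Bstar) ≤ (1 + 1 / (2 * c)) * (12 * (√s * lam) / a ^ 2) := by
  have ha := hX.kappaMinus_pos
  have hc := hX.ratio_pos
  have basic := hmin.frobNorm_mul_sub_sq_add_le hlam.le hBstar hE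
  have cone : ∑ i ∈ Sᶜ, l2norm ((B - Bstar) i) ≤ 3 * ∑ i ∈ S, l2norm ((B - Bstar) i) := by
    refine le_of_mul_le_mul_left ?_ hlam
    linarith [sq_nonneg (frobNorm (X * (B - Bstar)))]
  obtain ⟨t, hSt, hlower, hDt⟩ := hX.exists_restrictedEigenvalue_of_cone hS cone
  set y := frobNorm (X * (B - Bstar))
  have hy : 0 ≤ y := frobNorm_nonneg _
  have ht : t ≤ 2 * y / a := (le_div_iff₀ ha).2 (by linarith)
  have hrest : 0 ≤ lam * ∑ i ∈ Sᶜ, l2norm ((B - Bstar) i) :=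
    mul_nonneg hlam.le (Finset.sum_nonneg fun i _ => l2norm_nonneg _)
  have prediction : y ≤ 6 * (√s * lam) / a := by
    rcases hy.eq_or_lt with h0 | hpos
    · rw [← h0]
      positivity
    refine le_of_mul_le_mul_left ?_ hpos
    calc y * y ≤ 3 * lam * (√s * t) := by
          rw [← pow_two]
          exact (le_of_add_le_of_nonneg_left basic hrest).trans
            (mul_le_mul_of_nonneg_left hSt (by positivity))
      _ ≤ 3 * lam * (√s * (2 * y / a)) := by gcongr
      _ = y * (6 * (√s * lam) / a) := by ring
  refine ⟨prediction, hDt.trans (mul_le_mul_of_nonneg_left ?_ (by positivity))⟩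
  calc t ≤ 2 * y / a := ht
    _ ≤ 2 * (6 * (√s * lam) / a) / a := by gcongr
    _ = 12 * (√s * lam) / a ^ 2 := by ring

end IsGroupLassoMinimizer

end GroupLasso

section GaussianConcentration

variable {ι κ : Type*} [Fintype ι] [Fintype κ]

/-- Law of a random vector with i.i.d. `N(0, v)` coordinates. -/
abbrev gaussianVector (ι : Type*) [Fintype ι] (v : ℝ≥0) : Measure (ι → ℝ) :=
  Measure.pi fun _ => gaussianReal 0 v

instance isProbabilityMeasure_gaussianMatrix (n m : ℕ) (v : ℝ≥0) :
    IsProbabilityMeasure (gaussianMatrix n m v) :=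
  inferInstanceAs (IsProbabilityMeasure (Measure.pi fun _ : Fin n =>
    Measure.pi fun _ : Fin m => gaussianReal 0 v))

lemma lintegral_prod_ofReal_gaussianVector (v : ℝ≥0) {f : ι → ℝ → ℝ} (hf : ∀ i x, 0 ≤ f i x)
    (hint : ∀ i, Integrable (f i) (gaussianReal 0 v)) :
    ∫⁻ x, ENNReal.ofReal (∏ i, f i (x i)) ∂gaussianVector ι v =
      ENNReal.ofReal (∏ i, ∫ x, f i x ∂gaussianReal 0 v) := by
  rw [← integral_fintype_prod_eq_prod, ofReal_integral_eq_lintegral_ofReal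
    (Integrable.fintype_prod hint) (ae_of_all _ fun _ => Finset.prod_nonneg fun i _ => hf i _)]

lemma lintegral_exp_dotProduct_gaussianVector (v : ℝ≥0) (a : ι → ℝ) :
    ∫⁻ x, ENNReal.ofReal (Real.exp (a ⬝ᵥ x)) ∂gaussianVector ι v =
      ENNReal.ofReal (Real.exp (v * l2norm a ^ 2 / 2)) := by
  have mgf_coordinate (t : ℝ) :
      ∫ x, Real.exp (t * x) ∂gaussianReal 0 v = Real.exp (v * t ^ 2 / 2) := by
    simpa [mgf] using congrFun (mgf_id_gaussianReal (μ := 0) (v := v)) t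
  simp only [dotProduct, Real.exp_sum]
  rw [lintegral_prod_ofReal_gaussianVector v (fun _ _ => (Real.exp_pos _).le)
    fun i => integrable_exp_mul_gaussianReal (a i)]
  simp only [mgf_coordinate, ← Real.exp_sum, l2norm_sq, dotProduct, ← pow_two, Finset.mul_sum,
    Finset.sum_div]

lemma integral_exp_mul_sq_gaussianReal {α : ℝ} (hα : α < 1 / 2) :
    ∫ x, Real.exp (α * x ^ 2) ∂gaussianReal 0 1 = (√(1 - 2 * α))⁻¹ := by
  have density (x : ℝ) : gaussianPDFReal 0 1 x • Real.exp (α * x ^ 2) =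
      (√(2 * Real.pi))⁻¹ * Real.exp (-(1 / 2 - α) * x ^ 2) := by
    simp only [gaussianPDFReal, smul_eq_mul, NNReal.coe_one, mul_one, sub_zero]
    rw [mul_assoc, ← Real.exp_add]
    ring_nf
  simp only [integral_gaussianReal_eq_integral_smul one_ne_zero, density]
  rw [integral_const_mul, integral_gaussian, ← Real.sqrt_inv, ← Real.sqrt_inv,
    ← Real.sqrt_mul (by positivity)]
  congr 1
  have : 1 - 2 * α ≠ 0 := by linarith
  rw [show 1 / 2 - α = (1 - 2 * α) / 2 by ring]
  field_simp

lemma integrable_exp_mul_sq_gaussianReal {α : ℝ} (hα : α < 1 / 2) :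
    Integrable (fun x => Real.exp (α * x ^ 2)) (gaussianReal 0 1) := by
  refine .of_integral_ne_zero ?_
  rw [integral_exp_mul_sq_gaussianReal hα]
  exact (inv_pos.2 (Real.sqrt_pos.2 (by linarith))).ne'

lemma lintegral_exp_mul_l2norm_sq_gaussianVector {α : ℝ} (hα : α < 1 / 2) :
    ∫⁻ x, ENNReal.ofReal (Real.exp (α * l2norm x ^ 2)) ∂gaussianVector ι 1 =
      ENNReal.ofReal ((√(1 - 2 * α))⁻¹ ^ Fintype.card ι) := by
  simp only [l2norm_sq, dotProduct, ← pow_two, Finset.mul_sum, Real.exp_sum]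
  rw [lintegral_prod_ofReal_gaussianVector 1 (fun _ _ => (Real.exp_pos _).le)
    fun _ => integrable_exp_mul_sq_gaussianReal hα]
  simp only [integral_exp_mul_sq_gaussianReal hα, Finset.prod_const, Finset.card_univ]

variable [DecidableEq κ]

-- Decoupling: `exp (θ‖Mz‖²)` is the mean of `exp (√(2θ) ⟨Mz, h⟩)` over a standard Gaussian `h`;
-- after exchanging the integrals, the inner one is a Gaussian moment generating function.
lemma lintegral_exp_mul_l2norm_mulVec_sq_gaussianVector (v : ℝ≥0) {M : Matrix κ ι ℝ} {c θ : ℝ}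
    (hM : M * Mᵀ = c • 1) (hθ : 0 ≤ θ) (hlt : θ * c * v < 1 / 2) :
    ∫⁻ z, ENNReal.ofReal (Real.exp (θ * l2norm (M *ᵥ z) ^ 2)) ∂gaussianVector ι v =
      ENNReal.ofReal ((√(1 - 2 * (θ * c * v)))⁻¹ ^ Fintype.card κ) := by
  have sqrt_sq : √(2 * θ) ^ 2 = 2 * θ := Real.sq_sqrt (by positivity)
  have decouple (z : ι → ℝ) : ENNReal.ofReal (Real.exp (θ * l2norm (M *ᵥ z) ^ 2)) =
      ∫⁻ h, ENNReal.ofReal (Real.exp ((√(2 * θ) • M *ᵥ z) ⬝ᵥ h)) ∂gaussianVector κ 1 := by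
    rw [lintegral_exp_dotProduct_gaussianVector, l2norm_smul, mul_pow, sq_abs, sqrt_sq,
      NNReal.coe_one]
    ring_nf
  have transpose_mulVec_sq (h : κ → ℝ) : l2norm (Mᵀ *ᵥ h) ^ 2 = c * l2norm h ^ 2 := by
    rw [l2norm_sq, dotProduct_mulVec, vecMul_transpose, mulVec_mulVec, hM, smul_mulVec,
      one_mulVec, smul_dotProduct, smul_eq_mul, l2norm_sq]
  have integrate_z (h : κ → ℝ) :
      ∫⁻ z, ENNReal.ofReal (Real.exp ((√(2 * θ) • M *ᵥ z) ⬝ᵥ h)) ∂gaussianVector ι v =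
        ENNReal.ofReal (Real.exp (θ * c * v * l2norm h ^ 2)) := by
    have adjoint (z : ι → ℝ) : (√(2 * θ) • M *ᵥ z) ⬝ᵥ h = (√(2 * θ) • Mᵀ *ᵥ h) ⬝ᵥ z := by
      rw [smul_dotProduct, smul_dotProduct, mulVec_transpose, ← dotProduct_mulVec, dotProduct_comm]
    simp only [adjoint]
    rw [lintegral_exp_dotProduct_gaussianVector, l2norm_smul, mul_pow, sq_abs, sqrt_sq,
      transpose_mulVec_sq]
    ring_nf
  have measurable_exponent : Measurable fun w : (ι → ℝ) × (κ → ℝ) =>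
      ENNReal.ofReal (Real.exp ((√(2 * θ) • M *ᵥ w.1) ⬝ᵥ w.2)) := by
    simp only [dotProduct, Pi.smul_apply, mulVec]
    fun_prop
  simp only [decouple]
  rw [lintegral_lintegral_swap measurable_exponent.aemeasurable]
  simp only [integrate_z]
  exact lintegral_exp_mul_l2norm_sq_gaussianVector hlt

lemma gaussianVector_lt_l2norm_mulVec_le_of_moment (v : ℝ≥0) {M : Matrix κ ι ℝ} {c θ T : ℝ}
    (hM : M * Mᵀ = c • 1) (hθ : 0 ≤ θ) (hlt : θ * c * v < 1 / 2) (hT : 0 ≤ T) :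
    gaussianVector ι v {z | T < l2norm (M *ᵥ z)} ≤
      ENNReal.ofReal ((√(1 - 2 * (θ * c * v)))⁻¹ ^ Fintype.card κ / Real.exp (θ * T ^ 2)) := by
  rw [ENNReal.ofReal_div_of_pos (Real.exp_pos _),
    ← lintegral_exp_mul_l2norm_mulVec_sq_gaussianVector v hM hθ hlt]
  calc gaussianVector ι v {z | T < l2norm (M *ᵥ z)}
      ≤ gaussianVector ι v {z | ENNReal.ofReal (Real.exp (θ * T ^ 2)) ≤
          ENNReal.ofReal (Real.exp (θ * l2norm (M *ᵥ z) ^ 2))} := by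
        refine measure_mono fun z (hz : T < _) => ENNReal.ofReal_le_ofReal (Real.exp_le_exp.2 ?_)
        exact mul_le_mul_of_nonneg_left (pow_le_pow_left₀ hT hz.le 2) hθ
    _ ≤ _ := by
        refine meas_ge_le_lintegral_div ?_ (ENNReal.ofReal_pos.2 (Real.exp_pos _)).ne'
          ENNReal.ofReal_ne_top
        simp only [l2norm_sq, dotProduct, mulVec]
        fun_prop

-- With `t = √k u`, choose `θ` so that `2cvθ = 1 - (1 + u)⁻²`: the exponential moment is then
-- `(1 + u)ᵏ`, which is at most `exp (k u)`.
lemma gaussianVector_lt_l2norm_mulVec_le [Nonempty κ] {v : ℝ≥0} (hv : 0 < v) {M : Matrix κ ι ℝ}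
    {c t : ℝ} (hM : M * Mᵀ = c • 1) (hc : 0 < c) (ht : 0 ≤ t) :
    gaussianVector ι v {z | √(c * v) * (√(Fintype.card κ) + t) < l2norm (M *ᵥ z)} ≤
      ENNReal.ofReal (Real.exp (-t ^ 2 / 2)) := by
  have hcv : 0 < c * v := mul_pos hc hv
  set k := Fintype.card κ
  have hk : (0 : ℝ) < k := Nat.cast_pos.2 Fintype.card_pos
  obtain ⟨u, hu, rfl⟩ : ∃ u, 0 ≤ u ∧ t = √k * u :=
    ⟨t / √k, by positivity, (mul_div_cancel₀ t (Real.sqrt_pos.2 hk).ne').symm⟩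
  obtain ⟨θ, hθ⟩ : ∃ θ, 2 * (θ * c * v) = 1 - ((1 + u) ^ 2)⁻¹ :=
    ⟨(1 - ((1 + u) ^ 2)⁻¹) / (2 * (c * v)), by field_simp⟩
  have inv_pos : 0 < ((1 + u) ^ 2)⁻¹ := by positivity
  have inv_le_one : ((1 + u) ^ 2)⁻¹ ≤ 1 := inv_le_one_of_one_le₀ (by nlinarith)
  have hθ_nonneg : 0 ≤ θ := nonneg_of_mul_nonneg_left (b := c * v) (by linarith) hcv
  refine (gaussianVector_lt_l2norm_mulVec_le_of_moment v hM hθ_nonneg (by linarith)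
    (by positivity)).trans (ENNReal.ofReal_le_ofReal ?_)
  have moment_le : (√(1 - 2 * (θ * c * v)))⁻¹ ^ k ≤ Real.exp (k * u) := by
    rw [hθ, sub_sub_cancel, Real.sqrt_inv, inv_inv, Real.sqrt_sq (by positivity), Real.exp_nat_mul]
    exact pow_le_pow_left₀ (by positivity) (by linarith [Real.add_one_le_exp u]) k
  have exponent : θ * (√(c * v) * (√k + √k * u)) ^ 2 = k * u + (√k * u) ^ 2 / 2 :=
    calc θ * (√(c * v) * (√k + √k * u)) ^ 2
        = 2 * (θ * c * v) * (k * (1 + u) ^ 2) / 2 := by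
          rw [mul_pow, ← mul_one_add, mul_pow, Real.sq_sqrt hcv.le, Real.sq_sqrt hk.le]
          ring
      _ = k * u + k * u ^ 2 / 2 := by
          rw [hθ]
          field_simp
          ring
      _ = k * u + (√k * u) ^ 2 / 2 := by rw [mul_pow, Real.sq_sqrt hk.le]
  rw [exponent, div_le_iff₀ (Real.exp_pos _), ← Real.exp_add]
  rwa [show -(√k * u) ^ 2 / 2 + (k * u + (√k * u) ^ 2 / 2) = k * u by ring]

lemma measurePreserving_vec_gaussianMatrix (n m : ℕ) (v : ℝ≥0) :
    MeasurePreserving vec (gaussianMatrix n m v) (gaussianVector (Fin m × Fin n) v) := by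
  have measurable_vec : Measurable (vec : Matrix (Fin n) (Fin m) ℝ → Fin m × Fin n → ℝ) :=
    measurable_pi_lambda _ fun ij => (measurable_pi_apply ij.1).comp (measurable_pi_apply ij.2)
  refine ⟨measurable_vec, (Measure.pi_eq fun B hB => ?_).symm⟩
  have preimage_box : vec ⁻¹' Set.univ.pi B =
      Set.univ.pi fun i : Fin n => Set.univ.pi fun j : Fin m => B (j, i) := by
    ext Z
    rw [Set.mem_preimage, Set.mem_univ_pi, Prod.forall, forall_comm]
    exact Set.mem_univ_pi.trans (forall_congr' fun i => Set.mem_univ_pi) |>.symm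
  rw [Measure.map_apply measurable_vec (.univ_pi hB), preimage_box, Fintype.prod_prod_type_right]
  exact (Measure.pi_pi _ _).trans (Finset.prod_congr rfl fun i _ => Measure.pi_pi _ _)

lemma gaussianMatrix_lt_frobNorm_mul_mul_le {n m : ℕ} [DecidableEq ι] [Nonempty ι] [Nonempty κ]
    {v : ℝ≥0} (hv : 0 < v) {P : Matrix ι (Fin n) ℝ} {Q : Matrix (Fin m) κ ℝ} {c t : ℝ}
    (hP : P * Pᵀ = c • 1) (hQ : Qᵀ * Q = 1) (hc : 0 < c) (ht : 0 ≤ t) :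
    gaussianMatrix n m v
        {Z | √(c * v) * (√(Fintype.card κ * Fintype.card ι) + t) < frobNorm (P * Z * Q)} ≤
      ENNReal.ofReal (Real.exp (-t ^ 2 / 2)) := by
  open scoped Kronecker in
  have conformal : (Qᵀ ⊗ₖ P) * (Qᵀ ⊗ₖ P)ᵀ = c • 1 := by
    rw [← kroneckerMap_transpose, ← mul_kronecker_mul, transpose_transpose, hQ, hP,
      kronecker_smul, one_kronecker_one]
  have tail := gaussianVector_lt_l2norm_mulVec_le hv conformal hc ht
  rw [← (measurePreserving_vec_gaussianMatrix n m v).map_eq] at tail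
  have := (Measure.le_map_apply
    (measurePreserving_vec_gaussianMatrix n m v).measurable.aemeasurable _).trans tail
  simpa only [Set.preimage_ofPred_eq, kronecker_mulVec_vec, transpose_transpose,
    ← frobNorm_eq_l2norm_vec, Fintype.card_prod, Nat.cast_mul] using this

end GaussianConcentration

section NoiseEvents

lemma mul_le_measure_prod {α β : Type*} [MeasurableSpace α] [MeasurableSpace β] {μ : Measure α}
    {ν : Measure β} [SFinite ν] {S : Set (α × β)} {E : Set α} {x y : ℝ≥0∞} (hx : x ≤ μ E)
    (hy : ∀ u ∈ E, y ≤ ν (Prod.mk u ⁻¹' S)) : y * x ≤ μ.prod ν S := by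
  rw [← measure_toMeasurable S, Measure.prod_apply (measurableSet_toMeasurable _ S)]
  calc y * x ≤ y * μ {u | y ≤ ν (Prod.mk u ⁻¹' toMeasurable (μ.prod ν) S)} := by
        refine mul_le_mul_right (hx.trans (measure_mono fun u hu => (hy u hu).trans ?_)) y
        exact measure_mono (Set.preimage_mono (subset_toMeasurable _ S))
    _ ≤ _ := mul_meas_ge_le_lintegral
        (measurable_measure_prodMk_left (measurableSet_toMeasurable _ S)) y

lemma pow_three_le_measure_prod_prod {α β γ : Type*} [MeasurableSpace α] [MeasurableSpace β]
    [MeasurableSpace γ] {μ : Measure α} {ν : Measure β} {ρ : Measure γ} [SFinite ν] [SFinite ρ]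
    {E : Set α} {F : α → Set β} {G : α → β → Set γ} {x : ℝ≥0∞} (hE : x ≤ μ E)
    (hF : ∀ u, x ≤ ν (F u)) (hG : ∀ u w, x ≤ ρ (G u w)) :
    x ^ 3 ≤ μ.prod (ν.prod ρ) {ω | ω.1 ∈ E ∧ ω.2.1 ∈ F ω.1 ∧ ω.2.2 ∈ G ω.1 ω.2.1} := by
  rw [pow_succ, pow_two]
  refine mul_le_measure_prod hE fun u hu => mul_le_measure_prod (hF u) fun w hw => ?_
  exact (hG u w).trans (measure_mono fun z hz => ⟨hu, hw, hz⟩)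

lemma ofReal_one_sub_le_measure {α : Type*} [MeasurableSpace α] {μ : Measure α}
    [IsProbabilityMeasure μ] {E : Set α} {x : ℝ} (hx : 0 ≤ x) (hE : μ Eᶜ ≤ ENNReal.ofReal x) :
    ENNReal.ofReal (1 - x) ≤ μ E := by
  rw [ENNReal.ofReal_sub _ hx, ENNReal.ofReal_one, tsub_le_iff_right]
  calc 1 = μ (E ∪ Eᶜ) := by rw [Set.union_compl_self, measure_univ]
    _ ≤ μ E + μ Eᶜ := measure_union_le _ _
    _ ≤ μ E + ENNReal.ofReal x := by gcongr

lemma exp_neg_sqrt_mul_log_sq_div_two {x k : ℝ} (hx : 1 ≤ x) (hk : 0 ≤ k) :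
    Real.exp (-√(k * Real.log x) ^ 2 / 2) = x ^ (-(k / 2)) := by
  rw [Real.sq_sqrt (mul_nonneg hk (Real.log_nonneg hx)), Real.rpow_def_of_pos (by linarith)]
  ring_nf

variable {n m p : ℕ} {κ : Type*} [Fintype κ] [DecidableEq κ] [Nonempty κ] {v : ℝ≥0}

lemma gaussianMatrix_lt_l2norm_transpose_mul_le (hv : 0 < v) (X : Matrix (Fin n) (Fin p) ℝ)
    {V : Matrix (Fin m) κ ℝ} (hV : Vᵀ * V = 1) {j : Fin p} (hj : 0 < l2norm (Xᵀ j)) {t : ℝ}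
    (ht : 0 ≤ t) :
    gaussianMatrix n m v
        {Z | √v * l2norm (Xᵀ j) * (√(Fintype.card κ) + t) < l2norm ((Xᵀ * (Z * V)) j)} ≤
      ENNReal.ofReal (Real.exp (-t ^ 2 / 2)) := by
  have row_gram : replicateRow Unit (Xᵀ j) * (replicateRow Unit (Xᵀ j))ᵀ =
      l2norm (Xᵀ j) ^ 2 • 1 := by
    ext
    simp [l2norm_sq, Matrix.mul_apply, dotProduct]
  have row_mul (Z : Matrix (Fin n) (Fin m) ℝ) :
      frobNorm (replicateRow Unit (Xᵀ j) * Z * V) = l2norm ((Xᵀ * (Z * V)) j) := by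
    rw [Matrix.mul_assoc]
    simp [frobNorm, l2norm, Matrix.mul_apply]
  have tail := gaussianMatrix_lt_frobNorm_mul_mul_le hv row_gram hV (pow_pos hj 2) ht
  simpa only [row_mul, Real.sqrt_mul (sq_nonneg (l2norm (Xᵀ j))), Real.sqrt_sq hj.le,
    mul_comm (l2norm (Xᵀ j)), Fintype.card_unit, Nat.cast_one, mul_one] using tail

lemma le_gaussianMatrix_forall_l2norm_transpose_mul_le (hv : 0 < v) (hp : 1 ≤ p)
    {X : Matrix (Fin n) (Fin p) ℝ} (hX : ∀ j, 0 < l2norm (Xᵀ j)) {V : Matrix (Fin m) κ ℝ}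
    (hV : Vᵀ * V = 1) :
    ENNReal.ofReal (1 - 1 / p) ≤ gaussianMatrix n m v {Z | ∀ j, l2norm ((Xᵀ * (Z * V)) j) ≤
      √v * l2norm (Xᵀ j) * (√(Fintype.card κ) + √(4 * Real.log p))} := by
  have hp' : (1 : ℝ) ≤ p := Nat.one_le_cast.2 hp
  refine ofReal_one_sub_le_measure (by positivity) ?_
  calc _ ≤ gaussianMatrix n m v (⋃ j, {Z | √v * l2norm (Xᵀ j) *
          (√(Fintype.card κ) + √(4 * Real.log p)) < l2norm ((Xᵀ * (Z * V)) j)}) := by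
        refine measure_mono fun Z hZ => ?_
        simpa [Set.mem_iUnion] using hZ
    _ ≤ ∑ _ : Fin p, ENNReal.ofReal ((p : ℝ) ^ (-(4 / 2 : ℝ))) := by
        refine (measure_iUnion_fintype_le _ _).trans (Finset.sum_le_sum fun j _ => ?_)
        rw [← exp_neg_sqrt_mul_log_sq_div_two hp' (by norm_num)]
        exact gaussianMatrix_lt_l2norm_transpose_mul_le hv X hV (hX j) (Real.sqrt_nonneg _)
    _ = ENNReal.ofReal (1 / p) := by
        rw [Finset.sum_const, Finset.card_univ, Fintype.card_fin, ← ENNReal.ofReal_nsmul,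
          Real.rpow_neg (by positivity)]
        congr 1
        norm_num
        field_simp

lemma le_gaussianMatrix_frobNorm_transpose_mul_le [Nonempty (Fin m)] (hv : 0 < v) {x : ℝ}
    (hx : 1 ≤ x) {U : Matrix (Fin n) κ ℝ} (hU : Uᵀ * U = 1) :
    ENNReal.ofReal (1 - 1 / x) ≤ gaussianMatrix n m v {Z | frobNorm (Uᵀ * Z) ≤
      √v * (√(Fintype.card κ * m) + √(2 * Real.log x))} := by
  have gram : Uᵀ * Uᵀᵀ = (1 : ℝ) • 1 := by rw [transpose_transpose, hU, one_smul]
  have tail := gaussianMatrix_lt_frobNorm_mul_mul_le (Q := (1 : Matrix (Fin m) (Fin m) ℝ)) hv gram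
    (by simp) one_pos (Real.sqrt_nonneg (2 * Real.log x))
  rw [exp_neg_sqrt_mul_log_sq_div_two hx zero_le_two, div_self two_ne_zero, Real.rpow_neg_one,
    ← one_div] at tail
  refine ofReal_one_sub_le_measure (by positivity) ?_
  simpa only [Matrix.mul_one, one_mul, Fintype.card_fin, mul_comm (m : ℝ), Set.compl_ofPred,
    not_le] using tail

end NoiseEvents

section SubspaceEstimation

variable {I J : Type*} [Fintype I] [Fintype J] {r : ℕ}
  {M Z : Matrix I J ℝ} {F U : Matrix I (Fin r) ℝ} {V V0 V1 : Matrix J (Fin r) ℝ}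

lemma frobNorm_mul_mul_one_sub_le [DecidableEq J] (hU : Uᵀ * U = 1)
    (hV1 : IsRightSingularVectors (U * Uᵀ * (M + Z)) V1) :
    frobNorm (U * Uᵀ * M * (1 - V1 * V1ᵀ)) ≤ frobNorm (Uᵀ * Z) := by
  have hrank : (U * Uᵀ * (M + Z)).rank ≤ r := by
    rw [Matrix.mul_assoc]
    refine (rank_mul_le_left _ _).trans ?_
    simpa only [Fintype.card_fin] using rank_le_card_width U
  have residual : U * Uᵀ * M * (1 - V1 * V1ᵀ) = -(U * (Uᵀ * Z) * (1 - V1 * V1ᵀ)) := by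
    rw [eq_neg_iff_add_eq_zero, ← Matrix.mul_assoc U, ← Matrix.add_mul, ← Matrix.mul_add,
      mul_one_sub_eq_zero_of_rank_le hV1 hrank]
  calc frobNorm (U * Uᵀ * M * (1 - V1 * V1ᵀ)) = frobNorm (U * (Uᵀ * Z) * (1 - V1 * V1ᵀ)) := by
        rw [residual, frobNorm_neg]
    _ ≤ frobNorm (U * (Uᵀ * Z)) := frobNorm_mul_one_sub_le hV1.1 _
    _ = frobNorm (Uᵀ * Z) := frobNorm_mul_of_transpose_mul_self hU _

lemma one_sub_mul_eq_zero_of_isLeftSingularVectors [DecidableEq I]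
    (hU : IsLeftSingularVectors F U) : (1 - U * Uᵀ) * F = 0 := by
  have hrank : Fᵀ.rank ≤ r := by
    simpa only [rank_transpose, Fintype.card_fin] using rank_le_card_width F
  simpa using congrArg transpose (mul_one_sub_eq_zero_of_rank_le hU hrank)

-- Since `M = M V Vᵀ` and `1 - U Uᵀ` kills `F`, it maps `F - M V0` to `-(1 - U Uᵀ) M V (Vᵀ V0)`.
lemma singularValue_mul_frobNorm_one_sub_mul_le [DecidableEq I] (hM : M.rank ≤ r)
    (hV : IsRightSingularVectors M V) (hU : IsLeftSingularVectors F U) :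
    singularValue (Vᵀ * V0) r * frobNorm ((1 - U * Uᵀ) * M) ≤ frobNorm (F - M * V0) := by
  classical
  have factor : M = M * V * Vᵀ := by
    have := mul_one_sub_eq_zero_of_rank_le hV hM
    rwa [Matrix.mul_sub, Matrix.mul_one, sub_eq_zero, ← Matrix.mul_assoc] at this
  have residual : (1 - U * Uᵀ) * (M * V) * (Vᵀ * V0) = -((1 - U * Uᵀ) * (F - M * V0)) := by
    rw [Matrix.mul_sub, one_sub_mul_eq_zero_of_isLeftSingularVectors hU, zero_sub, neg_neg,
      Matrix.mul_assoc, ← Matrix.mul_assoc (M * V), ← factor]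
  have norm_eq : frobNorm ((1 - U * Uᵀ) * M) = frobNorm ((1 - U * Uᵀ) * (M * V)) := by
    conv_lhs => rw [factor, ← Matrix.mul_assoc]
    exact frobNorm_mul_transpose_of_transpose_mul_self hV.1 _
  calc singularValue (Vᵀ * V0) r * frobNorm ((1 - U * Uᵀ) * M)
      ≤ frobNorm ((1 - U * Uᵀ) * (M * V) * (Vᵀ * V0)) := by
        rw [norm_eq]
        simpa only [Fintype.card_fin] using singularValue_card_mul_frobNorm_le _ (Vᵀ * V0)
    _ = frobNorm ((1 - U * Uᵀ) * (F - M * V0)) := by rw [residual, frobNorm_neg]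
    _ ≤ frobNorm (F - M * V0) := frobNorm_one_sub_mul_le hU.1 _

lemma frobNorm_mul_one_sub_le_div_add [DecidableEq J] {c0 : ℝ} (hc0 : 0 < c0)
    (hV0 : c0 ≤ singularValue (Vᵀ * V0) r) (hM : M.rank ≤ r) (hV : IsRightSingularVectors M V)
    (hU : IsLeftSingularVectors F U) (hV1 : IsRightSingularVectors (U * Uᵀ * (M + Z)) V1) :
    frobNorm (M * (1 - V1 * V1ᵀ)) ≤ frobNorm (F - M * V0) / c0 + frobNorm (Uᵀ * Z) := by
  classical
  have split : M * (1 - V1 * V1ᵀ) =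
      (1 - U * Uᵀ) * M * (1 - V1 * V1ᵀ) + U * Uᵀ * M * (1 - V1 * V1ᵀ) := by
    rw [← Matrix.add_mul, ← Matrix.add_mul, sub_add_cancel, Matrix.one_mul]
  have left : frobNorm ((1 - U * Uᵀ) * M) ≤ frobNorm (F - M * V0) / c0 := by
    rw [le_div_iff₀' hc0]
    exact (mul_le_mul_of_nonneg_right hV0 (frobNorm_nonneg _)).trans
      (singularValue_mul_frobNorm_one_sub_mul_le hM hV hU)
  rw [split]
  exact (frobNorm_add_le _ _).trans (add_le_add ((frobNorm_mul_one_sub_le hV1.1 _).trans left)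
    (frobNorm_mul_mul_one_sub_le hU.1 hV1))

end SubspaceEstimation

section SARRS

lemma rank_sub_le {I J : Type*} [Finite I] [Fintype J] (M N : Matrix I J ℝ) :
    (M - N).rank ≤ M.rank + N.rank := by
  refine (Submodule.finrank_mono ?_).trans (Submodule.finrank_add_le_finrank_add_finrank _ _)
  rintro _ ⟨x, rfl⟩
  rw [mulVecLin_apply, sub_mulVec]
  exact Submodule.sub_mem _ (Submodule.mem_sup_left ⟨x, rfl⟩) (Submodule.mem_sup_right ⟨x, rfl⟩)

lemma schattenNorm_sq_le_of_frobNorm_le {I J : Type*} [Fintype I] [Fintype J] {M : Matrix I J ℝ}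
    {r : ℕ} (hM : M.rank ≤ 2 * r) {D x y : ℝ} (hD : frobNorm M ≤ D * (x + y)) {q : ℝ}
    (hq : q ∈ Set.Icc (1 : ℝ) 2) :
    schattenNorm M q ^ 2 ≤ 4 * D ^ 2 * (r : ℝ) ^ (2 / q - 1) * (x ^ 2 + y ^ 2) := by
  have hq0 : 0 < q := by linarith [hq.1]
  have exponent_nonneg : 0 ≤ 2 / q - 1 := sub_nonneg.2 ((one_le_div hq0).2 hq.2)
  have exponent_le_one : 2 / q - 1 ≤ 1 := by
    have : 2 / q ≤ 2 := div_le_self zero_le_two hq.1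
    linarith
  have rank_rpow : (M.rank : ℝ) ^ (2 / q - 1) ≤ 2 * (r : ℝ) ^ (2 / q - 1) :=
    calc (M.rank : ℝ) ^ (2 / q - 1) ≤ (2 * r : ℝ) ^ (2 / q - 1) :=
          Real.rpow_le_rpow (Nat.cast_nonneg _) (by exact_mod_cast hM) exponent_nonneg
      _ = 2 ^ (2 / q - 1) * (r : ℝ) ^ (2 / q - 1) := Real.mul_rpow zero_le_two (Nat.cast_nonneg _)
      _ ≤ 2 * (r : ℝ) ^ (2 / q - 1) := by
          gcongr
          simpa only [Real.rpow_one] using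
            Real.rpow_le_rpow_of_exponent_le one_le_two exponent_le_one
  have frob_sq : frobNorm M ^ 2 ≤ D ^ 2 * (2 * (x ^ 2 + y ^ 2)) := by
    refine (pow_le_pow_left₀ (frobNorm_nonneg M) hD 2).trans ?_
    rw [mul_pow]
    exact mul_le_mul_of_nonneg_left (add_sq_le (a := x)) (sq_nonneg D)
  calc schattenNorm M q ^ 2 ≤ (M.rank : ℝ) ^ (2 / q - 1) * frobNorm M ^ 2 :=
        schattenNorm_sq_le M hq
    _ ≤ 2 * (r : ℝ) ^ (2 / q - 1) * (D ^ 2 * (2 * (x ^ 2 + y ^ 2))) := by gcongr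
    _ = _ := by ring

lemma mul_apply_eq_zero_of_notMem_rowSupport {I J K : Type*} [Fintype I] [Fintype J]
    {A : Matrix I J ℝ} {i : I} (hi : i ∉ rowSupport A) (N : Matrix J K ℝ) : (A * N) i = 0 := by
  have hAi : A i = 0 := by simpa [rowSupport] using hi
  rw [mul_apply_eq_vecMul, hAi, zero_vecMul]

/-- `B2 * V1ᵀ` is an output of the SARRS algorithm with penalty level `lam` and initial matrix `V0`
on the three responses `Y1`, `Y2`, `Y3`; `B1`, `U1`, `V1`, `B2` are the matrices computed by its
steps (1) to (4), each allowed to be any solution of the corresponding step. -/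
structure IsSARRSRun {n m p r : ℕ} (X : Matrix (Fin n) (Fin p) ℝ) (lam : ℝ)
    (V0 : Matrix (Fin m) (Fin r) ℝ) (Y1 Y2 Y3 : Matrix (Fin n) (Fin m) ℝ)
    (B1 : Matrix (Fin p) (Fin r) ℝ) (U1 : Matrix (Fin n) (Fin r) ℝ)
    (V1 : Matrix (Fin m) (Fin r) ℝ) (B2 : Matrix (Fin p) (Fin r) ℝ) : Prop where
  initial_lasso : IsGroupLassoMinimizer X (Y1 * V0) lam B1
  left_singular : IsLeftSingularVectors (X * B1) U1
  right_singular : IsRightSingularVectors (U1 * U1ᵀ * Y2) V1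
  final_lasso : IsGroupLassoMinimizer X (Y3 * V1) lam B2

/-- Factor `D` in the bound `‖Â - A‖_F ≤ D (√s λ + σ √(r m))` for the SARRS output `Â`. -/
def sarrsFactor (a c c0 : ℝ) : ℝ :=
  (1 + 1 / (2 * c)) * 12 / a ^ 2 + 6 / (a ^ 2 * c0) + 1 / (2 * a ^ 2) + 2 / a

lemma sarrsFactor_pos {a c c0 : ℝ} (ha : 0 < a) (hc : 0 < c) (hc0 : 0 < c0) :
    0 < sarrsFactor a c c0 := by
  unfold sarrsFactor
  positivity

section Deterministic

variable {n m p r s k : ℕ} {a c c0 lam : ℝ} {X : Matrix (Fin n) (Fin p) ℝ}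
  {A : Matrix (Fin p) (Fin m) ℝ} {V V0 V1 : Matrix (Fin m) (Fin r) ℝ}
  {B1 B2 : Matrix (Fin p) (Fin r) ℝ} {U1 : Matrix (Fin n) (Fin r) ℝ}
  {Z1 Z2 Z3 : Matrix (Fin n) (Fin m) ℝ}

namespace IsSARRSRun

lemma frobNorm_sub_le
    (h : IsSARRSRun X lam V0 (X * A + Z1) (X * A + Z2) (X * A + Z3) B1 U1 V1 B2)
    (hX : SparseEigenCondition X s k a c) (hlam : 0 < lam) (hA : A.rank ≤ r)
    (hAs : (rowSupport A).card ≤ s) (hV : IsRightSingularVectors (X * A) V) (hc0 : 0 < c0)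
    (hV0 : c0 ≤ singularValue (Vᵀ * V0) r) (hZ1 : ∀ j, l2norm ((Xᵀ * (Z1 * V0)) j) ≤ lam / 2)
    (hZ3 : ∀ j, l2norm ((Xᵀ * (Z3 * V1)) j) ≤ lam / 2) :
    frobNorm (B2 * V1ᵀ - A) ≤ (1 + 1 / (2 * c)) * (12 * (√s * lam) / a ^ 2) +
      (6 * (√s * lam) / a / c0 + frobNorm (U1ᵀ * Z2)) / a := by
  have ha := hX.kappaMinus_pos
  have initial_lasso : IsGroupLassoMinimizer X (X * (A * V0) + Z1 * V0) lam B1 := by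
    simpa only [Matrix.add_mul, Matrix.mul_assoc] using h.initial_lasso
  have final_lasso : IsGroupLassoMinimizer X (X * (A * V1) + Z3 * V1) lam B2 := by
    simpa only [Matrix.add_mul, Matrix.mul_assoc] using h.final_lasso
  have initial_bound := (initial_lasso.frobNorm_le hlam hX hAs
    (fun _ hi => mul_apply_eq_zero_of_notMem_rowSupport hi V0) hZ1).1
  have final_bound := (final_lasso.frobNorm_le hlam hX hAs
    (fun _ hi => mul_apply_eq_zero_of_notMem_rowSupport hi V1) hZ3).2
  rw [Matrix.mul_sub, ← Matrix.mul_assoc] at initial_bound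
  have subspace_bound : a * frobNorm (A * (1 - V1 * V1ᵀ)) ≤
      6 * (√s * lam) / a / c0 + frobNorm (U1ᵀ * Z2) :=
    calc a * frobNorm (A * (1 - V1 * V1ᵀ)) ≤ frobNorm (X * A * (1 - V1 * V1ᵀ)) := by
          rw [Matrix.mul_assoc]
          exact hX.mul_frobNorm_le (hAs.trans (by have := hX.two_mul_le; omega))
            fun _ hi => mul_apply_eq_zero_of_notMem_rowSupport hi _
      _ ≤ frobNorm (X * B1 - X * A * V0) / c0 + frobNorm (U1ᵀ * Z2) :=
          frobNorm_mul_one_sub_le_div_add hc0 hV0 ((rank_mul_le_right X A).trans hA) hV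
            h.left_singular h.right_singular
      _ ≤ _ := by gcongr
  have split : B2 * V1ᵀ - A = (B2 - A * V1) * V1ᵀ + -(A * (1 - V1 * V1ᵀ)) := by
    rw [Matrix.sub_mul, Matrix.mul_sub, Matrix.mul_one, Matrix.mul_assoc A]
    abel
  rw [split]
  refine (frobNorm_add_le _ _).trans (add_le_add ?_ ?_)
  · rwa [frobNorm_mul_transpose_of_transpose_mul_self h.right_singular.1]
  · rwa [frobNorm_neg, le_div_iff₀' ha]

lemma schattenNorm_sub_sq_le
    (h : IsSARRSRun X lam V0 (X * A + Z1) (X * A + Z2) (X * A + Z3) B1 U1 V1 B2)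
    (hX : SparseEigenCondition X s k a c) (hlam : 0 < lam) (hA : A.rank ≤ r)
    (hAs : (rowSupport A).card ≤ s) (hV : IsRightSingularVectors (X * A) V) (hc0 : 0 < c0)
    (hV0 : c0 ≤ singularValue (Vᵀ * V0) r) (hZ1 : ∀ j, l2norm ((Xᵀ * (Z1 * V0)) j) ≤ lam / 2)
    {y : ℝ} (hy : 0 ≤ y) (hZ2 : frobNorm (U1ᵀ * Z2) ≤ 2 * y + √s * lam / (2 * a))
    (hZ3 : ∀ j, l2norm ((Xᵀ * (Z3 * V1)) j) ≤ lam / 2) {q : ℝ} (hq : q ∈ Set.Icc (1 : ℝ) 2) :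
    schattenNorm (B2 * V1ᵀ - A) q ^ 2 ≤
      4 * sarrsFactor a c c0 ^ 2 * (r : ℝ) ^ (2 / q - 1) * (y ^ 2 + s * lam ^ 2) := by
  have ha := hX.kappaMinus_pos
  have hc := hX.ratio_pos
  have hrank : (B2 * V1ᵀ - A).rank ≤ 2 * r := by
    have hB2 := (rank_mul_le_left B2 V1ᵀ).trans (rank_le_card_width B2)
    rw [Fintype.card_fin] at hB2
    have := rank_sub_le (B2 * V1ᵀ) A
    omega
  have hfrob : frobNorm (B2 * V1ᵀ - A) ≤ sarrsFactor a c c0 * (y + √s * lam) := by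
    set x := √s * lam
    have : 0 ≤ x := by positivity
    calc frobNorm (B2 * V1ᵀ - A) ≤ (1 + 1 / (2 * c)) * (12 * x / a ^ 2) +
          (6 * x / a / c0 + (2 * y + x / (2 * a))) / a := by
          refine (h.frobNorm_sub_le hX hlam hA hAs hV hc0 hV0 hZ1 hZ3).trans ?_
          gcongr
      _ = sarrsFactor a c c0 * (y + x) - (2 / a * x +
          ((1 + 1 / (2 * c)) * 12 / a ^ 2 + 6 / (a ^ 2 * c0) + 1 / (2 * a ^ 2)) * y) := by
          rw [sarrsFactor]
          field_simp
          ring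
      _ ≤ sarrsFactor a c c0 * (y + x) := sub_le_self _ (by positivity)
  have bound := schattenNorm_sq_le_of_frobNorm_le hrank hfrob hq
  rwa [mul_pow √(s : ℝ), Real.sq_sqrt (Nat.cast_nonneg s)] at bound

end IsSARRSRun

end Deterministic

lemma one_sub_three_div_le_pow_three {x : ℝ} (hx : 1 ≤ x) :
    ENNReal.ofReal (1 - 3 / x) ≤ ENNReal.ofReal (1 - 1 / x) ^ 3 := by
  have inv_le_one : 1 / x ≤ 1 := div_le_one_of_le₀ hx (by linarith)
  rw [← ENNReal.ofReal_pow (sub_nonneg.2 inv_le_one)]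
  refine ENNReal.ofReal_le_ofReal ?_
  have bernoulli := one_add_mul_le_pow (a := -(1 / x)) (by linarith) 3
  calc 1 - 3 / x = 1 + (3 : ℕ) * -(1 / x) := by push_cast; ring
    _ ≤ (1 + -(1 / x)) ^ 3 := bernoulli
    _ = (1 - 1 / x) ^ 3 := by rw [← sub_eq_add_neg]

section Penalty

variable {n m p r s k : ℕ} {a c σ lam : ℝ} {X : Matrix (Fin n) (Fin p) ℝ}

lemma SparseEigenCondition.mul_le_penalty (hX : SparseEigenCondition X s k a c) (hr : 1 ≤ r)
    (hσ : 0 ≤ σ) (hlam : ∀ j, 4 * σ * l2norm (Xᵀ j) * (√r + √(4 * Real.log p)) ≤ lam) :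
    4 * σ * a * (1 + √(4 * Real.log p)) ≤ lam := by
  let j : Fin p := ⟨0, hX.one_le.trans hX.le_card⟩
  refine le_trans ?_ (hlam j)
  have col_bound := hX.le_l2norm_col j
  have one_le_sqrt : 1 ≤ √(r : ℝ) := Real.one_le_sqrt.2 (Nat.one_le_cast.2 hr)
  have := l2norm_nonneg (Xᵀ j)
  gcongr

lemma SparseEigenCondition.penalty_pos (hX : SparseEigenCondition X s k a c) (hr : 1 ≤ r)
    (hσ : 0 < σ) (hlam : ∀ j, 4 * σ * l2norm (Xᵀ j) * (√r + √(4 * Real.log p)) ≤ lam) :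
    0 < lam := by
  have := hX.kappaMinus_pos
  exact lt_of_lt_of_le (by positivity) (hX.mul_le_penalty hr hσ.le hlam)

lemma SparseEigenCondition.mul_sqrt_log_le (hX : SparseEigenCondition X s k a c) (hr : 1 ≤ r)
    (hσ : 0 < σ) (hlam : ∀ j, 4 * σ * l2norm (Xᵀ j) * (√r + √(4 * Real.log p)) ≤ lam) :
    2 * σ * √(2 * Real.log p) ≤ √s * lam / (2 * a) := by
  have ha := hX.kappaMinus_pos
  have hs : 1 ≤ √(s : ℝ) := Real.one_le_sqrt.2 (Nat.one_le_cast.2 hX.sparsity_pos)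
  have := Real.log_natCast_nonneg p
  have log_le : √(2 * Real.log p) ≤ 1 + √(4 * Real.log p) :=
    (Real.sqrt_le_sqrt (by gcongr; norm_num)).trans (le_add_of_nonneg_left zero_le_one)
  rw [le_div_iff₀ (by positivity)]
  calc 2 * σ * √(2 * Real.log p) * (2 * a) = 4 * σ * a * √(2 * Real.log p) := by ring
    _ ≤ 4 * σ * a * (1 + √(4 * Real.log p)) := by gcongr
    _ ≤ lam := hX.mul_le_penalty hr hσ.le hlam
    _ ≤ √s * lam := le_mul_of_one_le_left (hX.penalty_pos hr hσ hlam).le hs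

variable {V : Matrix (Fin m) (Fin r) ℝ}

lemma sqrt_toNNReal_two_mul_sq (hσ : 0 ≤ σ) : √(Real.toNNReal ((2 * σ) ^ 2)) = 2 * σ := by
  rw [Real.coe_toNNReal _ (sq_nonneg _), Real.sqrt_sq (by positivity)]

lemma SparseEigenCondition.le_gaussianMatrix_forall_l2norm_le
    (hX : SparseEigenCondition X s k a c) (hr : 1 ≤ r) (hσ : 0 < σ)
    (hlam : ∀ j, 4 * σ * l2norm (Xᵀ j) * (√r + √(4 * Real.log p)) ≤ lam) (hV : Vᵀ * V = 1) :
    ENNReal.ofReal (1 - 1 / p) ≤ gaussianMatrix n m (Real.toNNReal ((2 * σ) ^ 2))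
      {Z | ∀ j, l2norm ((Xᵀ * (Z * V)) j) ≤ lam / 2} := by
  have : Nonempty (Fin r) := Fin.pos_iff_nonempty.1 hr
  refine (le_gaussianMatrix_forall_l2norm_transpose_mul_le (Real.toNNReal_pos.2 (by positivity))
    (hX.one_le.trans hX.le_card) (fun j => hX.kappaMinus_pos.trans_le (hX.le_l2norm_col j))
    hV).trans (measure_mono fun Z hZ j => (hZ j).trans ?_)
  rw [sqrt_toNNReal_two_mul_sq hσ.le, Fintype.card_fin]
  linarith [hlam j]

lemma SparseEigenCondition.le_gaussianMatrix_frobNorm_le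
    (hX : SparseEigenCondition X s k a c) (hr : 1 ≤ r) (hσ : 0 < σ)
    (hlam : ∀ j, 4 * σ * l2norm (Xᵀ j) * (√r + √(4 * Real.log p)) ≤ lam) (hV : Vᵀ * V = 1)
    {U : Matrix (Fin n) (Fin r) ℝ} (hU : Uᵀ * U = 1) :
    ENNReal.ofReal (1 - 1 / p) ≤ gaussianMatrix n m (Real.toNNReal ((2 * σ) ^ 2))
      {Z | frobNorm (Uᵀ * Z) ≤ 2 * (σ * √(r * m)) + √s * lam / (2 * a)} := by
  have : Nonempty (Fin r) := Fin.pos_iff_nonempty.1 hr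
  have : Nonempty (Fin m) := by
    by_contra hm
    rw [not_nonempty_iff] at hm
    simpa [Matrix.mul_apply] using congrFun₂ hV ⟨0, hr⟩ ⟨0, hr⟩
  refine (le_gaussianMatrix_frobNorm_transpose_mul_le
    (Real.toNNReal_pos.2 (by positivity)) (Nat.one_le_cast.2 (hX.one_le.trans hX.le_card))
    hU).trans (measure_mono fun Z hZ => le_trans (Set.mem_ofPred.1 hZ) ?_)
  rw [sqrt_toNNReal_two_mul_sq hσ.le, Fintype.card_fin]
  linarith [hX.mul_sqrt_log_le hr hσ hlam]

end Penalty

end SARRS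

theorem stmt6_general {n m p s r k : ℕ} {a c c0 σ lam : ℝ} {X : Matrix (Fin n) (Fin p) ℝ}
    {A : Matrix (Fin p) (Fin m) ℝ} {V V0 : Matrix (Fin m) (Fin r) ℝ}
    {B1 : Matrix (Fin n) (Fin m) ℝ → Matrix (Fin p) (Fin r) ℝ}
    {U1 : Matrix (Fin n) (Fin m) ℝ → Matrix (Fin n) (Fin r) ℝ}
    {V1 : Matrix (Fin n) (Fin m) ℝ → Matrix (Fin n) (Fin m) ℝ → Matrix (Fin m) (Fin r) ℝ}
    {B2 : Matrix (Fin n) (Fin m) ℝ → Matrix (Fin n) (Fin m) ℝ → Matrix (Fin n) (Fin m) ℝ →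
      Matrix (Fin p) (Fin r) ℝ}
    (hr : 1 ≤ r) (hA : A.rank ≤ r) (hAs : (rowSupport A).card ≤ s) (hσ : 0 < σ)
    (hlam : ∀ j, 4 * σ * l2norm (Xᵀ j) * (√r + √(4 * Real.log p)) ≤ lam)
    (hX : SparseEigenCondition X s k a c) (hV : IsRightSingularVectors (X * A) V)
    (hV0 : V0ᵀ * V0 = 1) (hc0 : 0 < c0) (hVV0 : c0 ≤ singularValue (Vᵀ * V0) r)
    (hrun : ∀ Z1 Z2 Z3, IsSARRSRun X lam V0 (X * A + Z1) (X * A + Z2) (X * A + Z3)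
      (B1 Z1) (U1 Z1) (V1 Z1 Z2) (B2 Z1 Z2 Z3)) :
    ENNReal.ofReal (1 - 3 / (p : ℝ)) ≤
      ((gaussianMatrix n m (Real.toNNReal ((2 * σ) ^ 2))).prod
          ((gaussianMatrix n m (Real.toNNReal ((2 * σ) ^ 2))).prod
            (gaussianMatrix n m (Real.toNNReal ((2 * σ) ^ 2)))))
        {ω | ∀ q ∈ Set.Icc (1 : ℝ) 2,
          schattenNorm (B2 ω.1 ω.2.1 ω.2.2 * (V1 ω.1 ω.2.1)ᵀ - A) q ^ 2 ≤
            4 * sarrsFactor a c c0 ^ 2 * (r : ℝ) ^ (2 / q - 1) *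
              (σ ^ 2 * r * m + s * lam ^ 2)} := by
  have noise_events := pow_three_le_measure_prod_prod
    (hX.le_gaussianMatrix_forall_l2norm_le hr hσ hlam hV0)
    (fun Z1 => hX.le_gaussianMatrix_frobNorm_le hr hσ hlam hV0
      (hrun Z1 0 0).left_singular.1)
    (fun Z1 Z2 => hX.le_gaussianMatrix_forall_l2norm_le hr hσ hlam
      (hrun Z1 Z2 0).right_singular.1)
  have hp : (1 : ℝ) ≤ p := Nat.one_le_cast.2 (hX.one_le.trans hX.le_card)
  refine (one_sub_three_div_le_pow_three hp).trans (noise_events.trans (measure_mono ?_))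
  rintro ⟨Z1, Z2, Z3⟩ ⟨hZ1, hZ2, hZ3⟩ q hq
  have bound := (hrun Z1 Z2 Z3).schattenNorm_sub_sq_le hX (hX.penalty_pos hr hσ hlam) hA hAs hV hc0
    hVV0 hZ1 (by positivity) hZ2 hZ3 hq
  rwa [mul_pow, Real.sq_sqrt (by positivity), ← mul_assoc] at bound

/-- Upper bound for the SARRS estimator. There is a sufficiently small absolute
constant c₁ > 0 such that for all values a = κ₋(s_*), b = κ₊(s_*), γ, c_*, c₀ there is a
constant C > 0 (depending only on these) such that: for the model Y = XA + Z with A ∈ Θ(s,r,d,γ),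
running SARRS (with group Lasso penalty at level λ ≥ 4σ max_j ‖X_{*j}‖(√r + √(4 log p))) on three
independent response copies Y_{(i)} = XA + Z_{(i)} with Z_{(i)} i.i.d. N(0,(2σ)²) entries, under
condition SE(s_*, c_*, K) with s_* ≥ 2s, 6c_* ≤ √(s_*/s − 1), σ_r(V'V₀) ≥ c₀ and √s λ/d ≤ c₁,
with probability at least 1 − 3/p the output Â = B₂V₁' satisfies
‖Â − A‖_{S_q}² ≤ C r^{2/q−1}(σ² r m + s λ²) for all q ∈ [1,2] simultaneously. -/
theorem stmt6 :
    ∃ c1 : ℝ, 0 < c1 ∧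
    ∀ a b γ cstar c0 : ℝ, 0 < a → 0 < c0 → 0 < cstar → 1 ≤ γ →
    ∃ C : ℝ, 0 < C ∧
    ∀ (n m p s r sstar : ℕ) (d σ lam K : ℝ)
      (X : Matrix (Fin n) (Fin p) ℝ) (A : Matrix (Fin p) (Fin m) ℝ)
      (V V0 : Matrix (Fin m) (Fin r) ℝ)
      (B1 : Matrix (Fin n) (Fin m) ℝ → Matrix (Fin p) (Fin r) ℝ)
      (U1 : Matrix (Fin n) (Fin m) ℝ → Matrix (Fin n) (Fin r) ℝ)
      (V1 : Matrix (Fin n) (Fin m) ℝ → Matrix (Fin n) (Fin m) ℝ → Matrix (Fin m) (Fin r) ℝ)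
      (B2 : Matrix (Fin n) (Fin m) ℝ → Matrix (Fin n) (Fin m) ℝ → Matrix (Fin n) (Fin m) ℝ →
        Matrix (Fin p) (Fin r) ℝ),
      1 ≤ r → r ≤ s →
      memTheta A s r d γ →
      0 < σ →
      -- penalty level: λ ≥ 4σ max_j ‖X_{*j}‖ (√r + √(4 log p))
      (∀ j : Fin p,
        4 * σ * l2norm (Xᵀ j) * (Real.sqrt r + Real.sqrt (4 * Real.log p)) ≤ lam) →
      -- sparse eigenvalue condition SE(s_*, c_*, K)
      1 < K → K⁻¹ ≤ kappaMinus X sstar → kappaMinus X sstar ≤ kappaPlus X sstar →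
      kappaPlus X sstar ≤ K →
      kappaMinus X sstar = a → kappaPlus X sstar = b →
      2 * s ≤ sstar →
      6 * cstar ≤ Real.sqrt ((sstar : ℝ) / (s : ℝ) - 1) →
      (kappaPlusSq X sstar - kappaMinusSq X (2 * sstar)) / kappaMinusSq X sstar < cstar →
      -- V is the right singular vector matrix of XA; V0 is the initial orthonormal matrix
      IsRightSingularVectors (X * A) V →
      V0ᵀ * V0 = 1 →
      c0 ≤ singularValue (Vᵀ * V0) r →
      Real.sqrt s * lam / d ≤ c1 →
      -- the SARRS algorithm, with independent samples used in steps 1, 3 and 4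
      (∀ z1 : Matrix (Fin n) (Fin m) ℝ, ∀ B' : Matrix (Fin p) (Fin r) ℝ,
        frobNorm ((X * A + z1) * V0 - X * B1 z1) ^ 2 / 2 + lam * norm21 (B1 z1) ≤
          frobNorm ((X * A + z1) * V0 - X * B') ^ 2 / 2 + lam * norm21 B') →
      (∀ z1 : Matrix (Fin n) (Fin m) ℝ, IsLeftSingularVectors (X * B1 z1) (U1 z1)) →
      (∀ z1 z2 : Matrix (Fin n) (Fin m) ℝ,
        IsRightSingularVectors (U1 z1 * (U1 z1)ᵀ * (X * A + z2)) (V1 z1 z2)) →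
      (∀ z1 z2 z3 : Matrix (Fin n) (Fin m) ℝ, ∀ B' : Matrix (Fin p) (Fin r) ℝ,
        frobNorm ((X * A + z3) * V1 z1 z2 - X * B2 z1 z2 z3) ^ 2 / 2
            + lam * norm21 (B2 z1 z2 z3) ≤
          frobNorm ((X * A + z3) * V1 z1 z2 - X * B') ^ 2 / 2 + lam * norm21 B') →
      -- conclusion: simultaneous Schatten norm error bounds with probability ≥ 1 − 3/p
      ENNReal.ofReal (1 - 3 / (p : ℝ)) ≤
        ((gaussianMatrix n m (Real.toNNReal ((2 * σ) ^ 2))).prod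
            ((gaussianMatrix n m (Real.toNNReal ((2 * σ) ^ 2))).prod
              (gaussianMatrix n m (Real.toNNReal ((2 * σ) ^ 2)))))
          {ω | ∀ q ∈ Set.Icc (1 : ℝ) 2,
            schattenNorm (B2 ω.1 ω.2.1 ω.2.2 * (V1 ω.1 ω.2.1)ᵀ - A) q ^ 2 ≤
              C * (r : ℝ) ^ (2 / q - 1) * (σ ^ 2 * r * m + s * lam ^ 2)} := by
  refine ⟨1, one_pos, fun a b γ cstar c0 ha hc0 hc _ =>
    ⟨4 * sarrsFactor a cstar c0 ^ 2, by have := sarrsFactor_pos ha hc hc0; positivity, ?_⟩⟩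
  intro n m p s r sstar d σ lam K X A V V0 B1 U1 V1 B2 hr hrs hA hσ hlam _ _ _ _ hκ _ hsk hc_le
    hc_lt hV hV0 hVV0 _ hB1 hU1 hV1 hB2
  exact stmt6_general hr hA.1.le hA.2.2.2.2 hσ hlam ⟨hr.trans hrs, hsk, hκ, ha, hc, hc_le, hc_lt⟩
    hV hV0 hc0 hVV0 fun Z1 Z2 Z3 => ⟨hB1 Z1, hU1 Z1, hV1 Z1 Z2, hB2 Z1 Z2 Z3⟩

end
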